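/- Let Ω and Ω' be open bounded convex sets in ℝⁿ of the same dimension n, with their Hilbert metrics, and let τ: Ω → Ω' be an isometry. If τ has a focusing n-simplex Δ (an n-simplex whose vertices are focusing points of τ and whose interior is contained in Ω), then τ is (the restriction of) a projective transformation. -/

import Mathlib

/-!
Chords of a convex domain are parametrized with unit speed by `u ↦ (P + eᵘ Q) / (1 + eᵘ)`, where
`P` and `Q` are the ends. If `P` is an extreme point of the closure, the chord is rigid: equality in
the triangle inequality between points of the chord only holds for points on it (`rigid_core`). Hence
an isometry maps such a chord onto a chord, with a shift `u ↦ u + k` of the parameter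
(`image_chord`). If `e` is a focusing point, all image chords issue from one point `e'`, and in terms of
lifts `hat x = (x, 1)` the shift says that `hat x + t hat e` is mapped to a multiple of
`hat (τ x) + a t hat e'`, with `a > 0` depending on `x` only (`focusing_movesTo`).

Given `p ∈ Ω`, `n` of the vertices of the simplex together with `p` have linearly independent lifts
(`exists_frame`), giving projective coordinates `[1 : y₁ : … : yₙ]` near `p`. Changing one
coordinate `yₖ` moves a point along the line through the vertex `wₖ`, so its image moves along the line
through `wₖ'`, which leaves the other projective coordinates of the image in the frame
`τ p, w₁', …, wₙ'` unchanged. The image coordinate `i` is therefore a function of `yᵢ` alone, and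
evaluating it on the line through `p` and `wᵢ` shows that it is `aᵢ yᵢ`. So `τ` is projective
near `p` (`exists_locallyProj`). That the image points form a frame follows from surjectivity of `τ`
(`linearIndependent_image`).

A projective map is determined by its restriction to a nonempty open set (`proj_unique`), and `Ω` is
connected, so the local projective maps are all the same (`locallyProj_glue`).
-/

open Set
open scoped LinearAlgebra.Projectivization
open scoped Classical

noncomputable section

abbrev Euc (n : ℕ) := EuclideanSpace ℝ (Fin n)

/-- `α` and `β` are the two points where the straight line through `x` and `y`
meets the boundary of `Ω`, labeled so that `|α−x| < |α−y|` and `|β−y| < |β−x|`. -/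
def IsHilbertPair {n : ℕ} (Ω : Set (Euc n)) (x y α β : Euc n) : Prop :=
  α ∈ frontier Ω ∧ β ∈ frontier Ω ∧
    Collinear ℝ ({α, x, y} : Set (Euc n)) ∧ Collinear ℝ ({β, x, y} : Set (Euc n)) ∧
    dist α x < dist α y ∧ dist β y < dist β x

/-- The Hilbert metric of `Ω`: `d_Ω(x,y) = ln((|α−y|/|α−x|)·(|β−x|/|β−y|))` for `x ≠ y`
(where `α, β` are as in `IsHilbertPair`; for `x ≠ y` in a convex domain `Ω` such a pair
exists and is unique), and `d_Ω(x,x) = 0` (no such pair exists when `x = y`). -/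
def hilbertDist {n : ℕ} (Ω : Set (Euc n)) (x y : Euc n) : ℝ :=
  if h : ∃ p : Euc n × Euc n, IsHilbertPair Ω x y p.1 p.2 then
    Real.log ((dist h.choose.1 y / dist h.choose.1 x) * (dist h.choose.2 x / dist h.choose.2 y))
  else 0

/-- An isometry of Hilbert geometries: a surjective distance preserving map. -/
def IsHilbertIsometry {n : ℕ} (Ω Ω' : Set (Euc n)) (τ : Euc n → Euc n) : Prop :=
  Set.MapsTo τ Ω Ω' ∧ Set.SurjOn τ Ω Ω' ∧
    ∀ x ∈ Ω, ∀ y ∈ Ω, hilbertDist Ω' (τ x) (τ y) = hilbertDist Ω x y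

/-- The standard affine chart `ℝⁿ → ℝPⁿ`, `x ↦ [x : 1]`. -/
def chart {n : ℕ} (x : Euc n) : Projectivization ℝ (Fin (n + 1) → ℝ) :=
  Projectivization.mk ℝ ((Fin.snoc (fun i => x i) 1 : Fin (n + 1) → ℝ))
    (fun h => one_ne_zero (α := ℝ) (by simpa using congrFun h (Fin.last n)))

/-- The projective transformation of `ℝPⁿ` induced by an element of `GL_{n+1}(ℝ)`
(every element of `PGL_{n+1}(ℝ)` arises this way). -/
def projMap {n : ℕ} (g : (Fin (n + 1) → ℝ) ≃ₗ[ℝ] (Fin (n + 1) → ℝ)) :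
    Projectivization ℝ (Fin (n + 1) → ℝ) → Projectivization ℝ (Fin (n + 1) → ℝ) :=
  Projectivization.map (g : (Fin (n + 1) → ℝ) →ₗ[ℝ] (Fin (n + 1) → ℝ)) g.injective

/-- `τ` agrees on `Ω` with (the restriction of) a projective transformation of `ℝPⁿ`. -/
def IsProjectiveOn {n : ℕ} (Ω : Set (Euc n)) (τ : Euc n → Euc n) : Prop :=
  ∃ g : (Fin (n + 1) → ℝ) ≃ₗ[ℝ] (Fin (n + 1) → ℝ),
    ∀ x ∈ Ω, chart (τ x) = projMap g (chart x)

/-- A ray in `Ω`: the intersection with `Ω` of a Euclidean ray starting at a point of `Ω`. -/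
def IsRayIn {n : ℕ} (Ω r : Set (Euc n)) : Prop :=
  ∃ p ∈ Ω, ∃ d : Euc n, d ≠ 0 ∧ r = {x | ∃ t : ℝ, 0 ≤ t ∧ x = p + t • d} ∩ Ω

/-- A line in `Ω`: the nonempty intersection of a straight line with `Ω`. -/
def IsLineIn {n : ℕ} (Ω L : Set (Euc n)) : Prop :=
  L.Nonempty ∧ ∃ p d : Euc n, d ≠ 0 ∧ L = {x | ∃ t : ℝ, x = p + t • d} ∩ Ω

/-- `a` is an accumulation point of the set `s ⊆ Ω` on the boundary of `Ω`.
For a ray `r` in a convex domain `Ω` there is exactly one such point, denoted `a(r)`. -/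
def IsBdryLimit {n : ℕ} (Ω s : Set (Euc n)) (a : Euc n) : Prop :=
  a ∈ frontier Ω ∧ a ∈ closure s

/-- `e` is a focusing point of the isometry `τ : Ω → Ω'`: an extreme point of the closure
of `Ω` such that for any two rays `r₁, r₂` in `Ω` with `a(r₁) = a(r₂) = e` one has
`a(τ(r₁)) = a(τ(r₂))`. -/
def IsFocusingPoint {n : ℕ} (Ω Ω' : Set (Euc n)) (τ : Euc n → Euc n) (e : Euc n) : Prop :=
  e ∈ Set.extremePoints ℝ (closure Ω) ∧
    ∀ r₁ r₂ : Set (Euc n), IsRayIn Ω r₁ → IsRayIn Ω r₂ →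
      IsBdryLimit Ω r₁ e → IsBdryLimit Ω r₂ e →
      ∀ a₁ a₂ : Euc n, IsBdryLimit Ω' (τ '' r₁) a₁ → IsBdryLimit Ω' (τ '' r₂) a₂ → a₁ = a₂

/-- An extreme line in `Ω`: a line in `Ω` whose closure meets `∂Ω` in extreme points
of the closure of `Ω`. -/
def IsExtremeLine {n : ℕ} (Ω L : Set (Euc n)) : Prop :=
  IsLineIn Ω L ∧ ∀ x ∈ closure L ∩ frontier Ω, x ∈ Set.extremePoints ℝ (closure Ω)

/-- `s` is rigid in `Ω`: for any two points `a, b` of `s` the segment `[a,b]` is the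
unique geodesic from `a` to `b` in `(Ω, d_Ω)`, i.e. every point `z` with
`d(a,z) + d(z,b) = d(a,b)` lies on the segment `[a,b]`. -/
def IsRigidSet {n : ℕ} (Ω s : Set (Euc n)) : Prop :=
  ∀ a ∈ s, ∀ b ∈ s, ∀ z ∈ Ω,
    hilbertDist Ω a z + hilbertDist Ω z b = hilbertDist Ω a b → z ∈ segment ℝ a b

/-- A face of a closed convex set `C`: a convex subset `F ⊆ C` such that whenever an open
segment between two points of `C` meets `F`, the whole closed segment lies in `F`. -/
def IsFace {n : ℕ} (C F : Set (Euc n)) : Prop :=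
  Convex ℝ F ∧ IsExtreme ℝ C F

/-- A face of `C` which is neither empty nor all of `C`. -/
def IsProperFace {n : ℕ} (C F : Set (Euc n)) : Prop :=
  IsFace C F ∧ F.Nonempty ∧ F ≠ C

/-- `Ω` is a cone with vertex `v` and base `B`: `B` is an `(n−1)`-dimensional convex
domain lying in a hyperplane not containing `v`, and `Ω` is the union of the open
segments from `v` to the points of `B`. -/
def IsConeWith {n : ℕ} (Ω : Set (Euc n)) (v : Euc n) (B : Set (Euc n)) : Prop :=
  ∃ (f : Euc n →ₗ[ℝ] ℝ) (c : ℝ), f ≠ 0 ∧ (∀ b ∈ B, f b = c) ∧ f v ≠ c ∧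
    B.Nonempty ∧ Convex ℝ B ∧ Bornology.IsBounded B ∧
    B = intrinsicInterior ℝ B ∧
    (affineSpan ℝ B : Set (Euc n)) = {x | f x = c} ∧
    Ω = ⋃ b ∈ B, openSegment ℝ v b

/-- `Ω` is a cone. -/
def IsCone {n : ℕ} (Ω : Set (Euc n)) : Prop :=
  ∃ v B, IsConeWith Ω v B

/-! ### The Hilbert distance and rigidity -/

/-- A ray from a point of an open convex set leaves it at most once. -/
lemma ray_unique {n : ℕ} {Ω : Set (Euc n)} (hop : IsOpen Ω) (hcv : Convex ℝ Ω) {x d : Euc n}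
    (hx : x ∈ Ω) {s t : ℝ} (hs : 0 < s) (ht : 0 < t) (hs' : x + s • d ∈ frontier Ω)
    (ht' : x + t • d ∈ frontier Ω) : s = t := by
  have key : ∀ s t : ℝ, 0 < s → x + s • d ∈ frontier Ω → x + t • d ∈ frontier Ω → ¬ s < t := by
    intro s t hs hs' ht' hst
    have ht : 0 < t := hs.trans hst
    have h1 : x + s • d ∈ openSegment ℝ x (x + t • d) := by
      refine ⟨1 - s / t, s / t, ?_, by positivity, by ring, ?_⟩
      · rw [sub_pos, div_lt_one ht]; exact hst
      · match_scalars <;> field_simp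
        ring
    have h2 := hcv.openSegment_interior_closure_subset_interior
      (by rwa [hop.interior_eq]) (frontier_subset_closure ht') h1
    exact hs'.2 h2
  exact le_antisymm (not_lt.1 (key t s ht ht' hs')) (not_lt.1 (key s t hs hs' ht'))

lemma ray_exists {n : ℕ} {Ω : Set (Euc n)} (hop : IsOpen Ω) (hbd : Bornology.IsBounded Ω)
    {x d : Euc n} (hx : x ∈ Ω) (hd : d ≠ 0) : ∃ s : ℝ, 0 < s ∧ x + s • d ∈ frontier Ω := by
  have hcont : Continuous fun t : ℝ => x + t • d := by fun_prop
  set S : Set ℝ := {t | 0 ≤ t ∧ x + t • d ∉ Ω} with hS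
  have hScl : IsClosed S :=
    isClosed_Ici.inter ((hop.preimage hcont).isClosed_compl)
  have hSbd : BddBelow S := ⟨0, fun t ht => ht.1⟩
  have hSne : S.Nonempty := by
    obtain ⟨R, hR⟩ := hbd.exists_norm_le
    have hdp : 0 < ‖d‖ := norm_pos_iff.2 hd
    have hR0 : 0 ≤ R := (norm_nonneg x).trans (hR x hx)
    refine ⟨(2 * R + 1) / ‖d‖, by positivity, fun hmem => ?_⟩
    have h1 := hR _ hmem
    have h2 : ‖((2 * R + 1) / ‖d‖) • d‖ = 2 * R + 1 := by
      rw [norm_smul, Real.norm_of_nonneg (by positivity)]; field_simp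
    have h3 : ‖((2 * R + 1) / ‖d‖) • d‖ ≤ ‖x + ((2 * R + 1) / ‖d‖) • d‖ + ‖x‖ := by
      have := norm_sub_le (x + ((2 * R + 1) / ‖d‖) • d) x
      simpa using this
    have := hR x hx
    linarith
  have hmem := hScl.csInf_mem hSne hSbd
  have hpos : 0 < sInf S := by
    rcases hmem.1.lt_or_eq with h | h
    · exact h
    · exact absurd hx (by have := hmem.2; rw [← h] at this; simpa using this)
  refine ⟨sInf S, hpos, ?_, by rw [hop.interior_eq]; exact hmem.2⟩
  have hlim : Filter.Tendsto (fun t : ℝ => x + t • d) (nhdsWithin (sInf S) (Iio (sInf S)))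
      (nhds (x + sInf S • d)) := (hcont.tendsto _).mono_left nhdsWithin_le_nhds
  refine mem_closure_of_tendsto hlim ?_
  filter_upwards [self_mem_nhdsWithin, nhdsWithin_le_nhds (Ioi_mem_nhds hpos)] with t ht ht0
  by_contra hcon
  exact absurd (csInf_le hSbd (show t ∈ S from ⟨le_of_lt ht0, hcon⟩)) (not_le.2 ht)

/-- The boundary points in the definition of the Hilbert metric lie on the line `xy` on the expected
side: the one nearer to `x` is on the ray from `y` through `x`, beyond `x`. -/
lemma pair_param {n : ℕ} {Ω : Set (Euc n)} (hop : IsOpen Ω) (hcv : Convex ℝ Ω)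
    {x y α : Euc n} (hx : x ∈ Ω) (hy : y ∈ Ω) (hα : α ∈ frontier Ω)
    (hcol : Collinear ℝ ({α, x, y} : Set (Euc n))) (hlt : dist α x < dist α y) :
    ∃ s : ℝ, 0 < s ∧ α = x + s • (x - y) := by
  have hne : x ≠ y := by rintro rfl; exact lt_irrefl _ hlt
  rw [collinear_iff_of_mem (p₀ := x) (by simp)] at hcol
  obtain ⟨v, hv⟩ := hcol
  obtain ⟨a, ha⟩ := hv α (by simp)
  obtain ⟨b, hb⟩ := hv y (by simp)
  simp only [vadd_eq_add] at ha hb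
  have hb0 : b ≠ 0 := by
    rintro rfl
    apply hne; rw [hb]; simp
  have hv0 : v = b⁻¹ • (y - x) := by
    rw [hb]; simp [smul_smul, hb0]
  set u := a * b⁻¹ with hu
  have hαu : α = x + u • (y - x) := by rw [ha, hv0, smul_smul, add_comm]
  have hyx : 0 < ‖y - x‖ := norm_pos_iff.2 (sub_ne_zero.2 hne.symm)
  have h1 : |u| < |u - 1| := by
    have e1 : dist α x = |u| * ‖y - x‖ := by
      rw [dist_eq_norm, hαu, add_sub_cancel_left, norm_smul, Real.norm_eq_abs]
    have e2 : dist α y = |u - 1| * ‖y - x‖ := by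
      rw [dist_eq_norm, hαu, show x + u • (y - x) - y = (u - 1) • (y - x) by module,
        norm_smul, Real.norm_eq_abs]
    rw [e1, e2] at hlt
    exact lt_of_mul_lt_mul_right hlt hyx.le
  have h2 : u < 0 := by
    by_contra hcon
    push Not at hcon
    have hu1 : u < 1 := by
      by_contra h; push Not at h
      rw [abs_of_nonneg hcon, abs_of_nonneg (by linarith)] at h1
      linarith
    have : α ∈ Ω := by
      rw [hαu]
      exact hcv.add_smul_sub_mem hx hy ⟨hcon, hu1.le⟩
    exact hα.2 (by rwa [hop.interior_eq])
  exact ⟨-u, by linarith, by rw [hαu]; module⟩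

/-- The Hilbert distance in terms of the exit parameters `s`, `t` of the line through `x` and `y`. -/
lemma hilbertDist_eq {n : ℕ} {Ω : Set (Euc n)} (hop : IsOpen Ω) (hcv : Convex ℝ Ω)
    {x y : Euc n} (hx : x ∈ Ω) (hy : y ∈ Ω) (hne : x ≠ y) {s t : ℝ} (hs : 0 < s) (ht : 0 < t)
    (hs' : x + s • (x - y) ∈ frontier Ω) (ht' : y + t • (y - x) ∈ frontier Ω) :
    hilbertDist Ω x y = Real.log (1 + 1 / s) + Real.log (1 + 1 / t) := by
  have hyx : 0 < ‖x - y‖ := norm_pos_iff.2 (sub_ne_zero.2 hne)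
  have hyx' : ‖y - x‖ = ‖x - y‖ := norm_sub_rev _ _
  have d1 : ∀ x y : Euc n, ∀ s : ℝ, 0 < s → dist (x + s • (x - y)) x = s * ‖x - y‖ := by
    intro x y s hs
    rw [dist_eq_norm, add_sub_cancel_left, norm_smul, Real.norm_of_nonneg hs.le]
  have d2 : ∀ x y : Euc n, ∀ s : ℝ, 0 < s → dist (x + s • (x - y)) y = (s + 1) * ‖x - y‖ := by
    intro x y s hs
    rw [dist_eq_norm, show x + s • (x - y) - y = (s + 1) • (x - y) by module, norm_smul,
      Real.norm_of_nonneg (by linarith)]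
  have hcol : ∀ x y : Euc n, ∀ s : ℝ, Collinear ℝ ({x + s • (x - y), x, y} : Set (Euc n)) := by
    intro x y s
    rw [collinear_iff_of_mem (p₀ := x) (by simp)]
    refine ⟨x - y, ?_⟩
    rintro p (rfl | rfl | rfl)
    · exact ⟨s, by simp [add_comm]⟩
    · exact ⟨0, by simp⟩
    · exact ⟨-1, by simp⟩
  have hex : ∃ p : Euc n × Euc n, IsHilbertPair Ω x y p.1 p.2 := by
    refine ⟨(x + s • (x - y), y + t • (y - x)), hs', ht', hcol x y s, ?_, ?_, ?_⟩
    · rw [show ({y + t • (y - x), x, y} : Set (Euc n)) = {y + t • (y - x), y, x} by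
        rw [Set.pair_comm]]
      exact hcol y x t
    · simp only [d1 x y s hs, d2 x y s hs]; nlinarith
    · simp only [d1 y x t ht, d2 y x t ht]; nlinarith
  have hspec := hex.choose_spec
  unfold hilbertDist
  rw [dif_pos hex]
  generalize hex.choose = p at hspec
  obtain ⟨hp1, hp2, hc1, hc2, hl1, hl2⟩ := hspec
  obtain ⟨s2, hs2, e1⟩ := pair_param hop hcv hx hy hp1 hc1 hl1
  obtain ⟨t2, ht2, e2⟩ := pair_param hop hcv hy hx hp2
    (by rwa [Set.pair_comm]) hl2
  have es : s2 = s := ray_unique hop hcv hx hs2 hs (e1 ▸ hp1) hs'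
  have et : t2 = t := ray_unique hop hcv hy ht2 ht (e2 ▸ hp2) ht'
  rw [e1, e2, es, et, d1 x y s hs, d2 x y s hs, d1 y x t ht, d2 y x t ht, hyx',
    ← Real.log_mul (by positivity) (by positivity)]
  congr 1
  field_simp

lemma hilbertDist_self {n : ℕ} (Ω : Set (Euc n)) (x : Euc n) : hilbertDist Ω x x = 0 := by
  unfold hilbertDist
  rw [dif_neg]
  rintro ⟨p, hp⟩
  exact lt_irrefl _ hp.2.2.2.2.1

/-- A supporting functional at a boundary point, strict on the open convex set itself. -/
lemma support_at {n : ℕ} {Ω : Set (Euc n)} (hop : IsOpen Ω) (hcv : Convex ℝ Ω) {z : Euc n}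
    (hz : z ∈ frontier Ω) : ∃ f : Euc n →L[ℝ] ℝ, (∀ a ∈ Ω, f a < f z) ∧
      ∀ a ∈ closure Ω, f a ≤ f z := by
  obtain ⟨f, hf⟩ := geometric_hahn_banach_open_point hcv hop
    (show z ∉ Ω by have := hz.2; rwa [hop.interior_eq] at this)
  refine ⟨f, hf, fun a ha => ?_⟩
  exact closure_minimal (fun a ha => (hf a ha).le) (isClosed_le f.continuous continuous_const) ha

set_option maxHeartbeats 400000 in
/-- If the line through `a` and `c` leaves `Ω` beyond `a` at an extreme point `A` of the closure, then
equality in the triangle inequality for `a, w, c` forces `w` to lie on the segment `[a, c]`.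

Comparing with supporting functionals at the two ends of the line gives the triangle inequality;
equality forces the exit points of the rays `c → w` and `w → a` onto the supporting hyperplane
at `A`, and then `A` is a proper convex combination of these two exit points. As `A` is extreme, both
coincide with `A`, so `w` is on the line. -/
lemma rigid_core {n : ℕ} {Ω : Set (Euc n)} (hop : IsOpen Ω) (hbd : Bornology.IsBounded Ω)
    (hcv : Convex ℝ Ω) {a c w : Euc n} (ha : a ∈ Ω) (hc : c ∈ Ω) (hw : w ∈ Ω) (hac : a ≠ c)
    {s : ℝ} (hs : 0 < s) (hext : a + s • (a - c) ∈ extremePoints ℝ (closure Ω))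
    (hfr : a + s • (a - c) ∈ frontier Ω)
    (hd : hilbertDist Ω a w + hilbertDist Ω w c = hilbertDist Ω a c) :
    w ∈ segment ℝ a c := by
  by_cases haw : a = w
  · subst haw; exact left_mem_segment _ _ _
  by_cases hwc : w = c
  · subst hwc; exact right_mem_segment _ _ _
  obtain ⟨t, ht, ht'⟩ := ray_exists hop hbd hc (sub_ne_zero.2 hac.symm)
  obtain ⟨s1, hs1, hs1'⟩ := ray_exists hop hbd ha (sub_ne_zero.2 haw)
  obtain ⟨t1, ht1, ht1'⟩ := ray_exists hop hbd hw (sub_ne_zero.2 (Ne.symm haw))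
  obtain ⟨s2, hs2, hs2'⟩ := ray_exists hop hbd hw (sub_ne_zero.2 hwc)
  obtain ⟨t2, ht2, ht2'⟩ := ray_exists hop hbd hc (sub_ne_zero.2 (Ne.symm hwc))
  rw [hilbertDist_eq hop hcv ha hw haw hs1 ht1 hs1' ht1',
    hilbertDist_eq hop hcv hw hc hwc hs2 ht2 hs2' ht2',
    hilbertDist_eq hop hcv ha hc hac hs ht hfr ht'] at hd
  obtain ⟨f, hf, hfc⟩ := support_at hop hcv ht'
  obtain ⟨g, hg, hgc⟩ := support_at hop hcv hfr
  set B := c + t • (c - a) with hB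
  set A := a + s • (a - c) with hA
  have hpos : ∀ r : ℝ, 0 < r → 0 < 1 + 1 / r := fun r hr => by positivity
  -- `fa, fw, fc` and `ga, gw, gc` below are the heights of the three points under the supporting
  -- hyperplanes at `B` and at `A`; cross ratios are bounded below by ratios of heights.
  have hfa := sub_pos.2 (hf a ha)
  have hfw := sub_pos.2 (hf w hw)
  have hfcc := sub_pos.2 (hf c hc)
  have hga := sub_pos.2 (hg a ha)
  have hgw := sub_pos.2 (hg w hw)
  have hgcc := sub_pos.2 (hg c hc)
  have fB : f B = f c + t * (f c - f a) := by simp [hB]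
  have gA : g A = g a + s * (g a - g c) := by simp [hA]
  have f1 := hfc _ (frontier_subset_closure ht1')
  have f2 := hfc _ (frontier_subset_closure ht2')
  have g1 := hgc _ (frontier_subset_closure hs1')
  have g2 := hgc _ (frontier_subset_closure hs2')
  simp only [map_add, map_smul, map_sub, smul_eq_mul] at f1 f2 g1 g2
  set fa := f B - f a with hfa_def
  set fw := f B - f w with hfw_def
  set fc := f B - f c with hfc_def
  set ga := g A - g a with hga_def
  set gw := g A - g w with hgw_def
  set gc := g A - g c with hgc_def
  have E0 : 1 + 1 / t = fa / fc := by field_simp; linarith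
  have E1 : fa / fw ≤ 1 + 1 / t1 := by
    rw [div_le_iff₀ hfw]; field_simp; linarith
  have E2 : fw / fc ≤ 1 + 1 / t2 := by
    rw [div_le_iff₀ hfcc]; field_simp; linarith
  have G0 : 1 + 1 / s = gc / ga := by field_simp; linarith
  have G1 : gw / ga ≤ 1 + 1 / s1 := by
    rw [div_le_iff₀ hga]; field_simp; linarith
  have G2 : gc / gw ≤ 1 + 1 / s2 := by
    rw [div_le_iff₀ hgw]; field_simp; linarith
  have L0 : Real.log (1 + 1 / t) = Real.log (fa / fw) + Real.log (fw / fc) := by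
    rw [E0, ← Real.log_mul (by positivity) (by positivity)]; congr 1; field_simp
  have M0 : Real.log (1 + 1 / s) = Real.log (gw / ga) + Real.log (gc / gw) := by
    rw [G0, ← Real.log_mul (by positivity) (by positivity)]; congr 1; field_simp
  have L1 := Real.log_le_log (by positivity) E1
  have L2 := Real.log_le_log (by positivity) E2
  have M1 := Real.log_le_log (by positivity) G1
  have M2 := Real.log_le_log (by positivity) G2
  have K1 : gw / ga = 1 + 1 / s1 :=
    Real.log_injOn_pos (show 0 < gw / ga by positivity) (hpos _ hs1) (by linarith)
  have K2 : gc / gw = 1 + 1 / s2 :=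
    Real.log_injOn_pos (show 0 < gc / gw by positivity) (hpos _ hs2) (by linarith)
  have K1' : s1 * gw = (1 + s1) * ga := by field_simp at K1; linarith
  have K2' : s2 * gc = (1 + s2) * gw := by field_simp at K2; linarith
  -- `s` is determined by `s1` and `s2` through the heights, which yields the convex combination.
  have hS : 0 < 1 + s2 + s1 := by positivity
  have hcomb : A = ((1 + s2) / (1 + s2 + s1)) • (a + s1 • (a - w)) +
      (s1 / (1 + s2 + s1)) • (w + s2 • (w - c)) := by
    have hsval : s = s1 * s2 / (1 + s2 + s1) := by
      have h0 : (1 + s) * ga = s * gc := by field_simp at G0; linarith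
      have : (1 + s) * (s1 * s2) * gc= s * gc * ((1 + s1) * (1+s2)) := by
        rw [← h0]
        linear_combination (1+s)*s1 * K2' + (1 + s) * (1+s2) * K1'
      have := mul_right_cancel₀ (ne_of_gt hgcc)
        (this.trans (by ring : _ = (s * ((1 + s1) * (1+s2))) * gc))
      field_simp
      linarith
    rw [hA, hsval]
    match_scalars <;> field_simp <;> ring
  have hmem : A ∈ openSegment ℝ (a + s1 • (a - w)) (w + s2 • (w - c)) :=
    ⟨_, _, by positivity, by positivity, by field_simp, hcomb.symm⟩
  have hex := (mem_extremePoints.1 hext).2 _ (frontier_subset_closure hs1') _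
    (frontier_subset_closure hs2') hmem
  obtain ⟨e1, e2⟩ := hex
  have hw1 : w = a + (s / s1) • (c - a) := by
    have : s1 • (a - w) = s • (a - c) := by
      rw [hA] at e1; exact add_left_cancel e1
    have h2 : a - w = (s / s1) • (a - c) := by
      rw [div_eq_inv_mul, mul_smul, ← this, smul_smul, inv_mul_cancel₀ hs1.ne', one_smul]
    rw [show w = a - (a - w) by abel, h2]; module
  have hle : s / s1 < 1 := by
    have h5 : g w = g a + (s / s1) * (g c - g a) := by
      have := congrArg g hw1; simpa using this
    have h6 : 0 < gc - gw :=
      pos_of_mul_pos_right (show 0 < s2 * (gc - gw) by linarith) hs2.le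
    have h0 : (1 + s) * ga = s * gc := by field_simp at G0; linarith
    have h9 : 0 < gc - ga :=
      pos_of_mul_pos_right (show 0 < s * (gc - ga) by linarith) hs.le
    have h10 : (1 - s / s1) * (gc - ga) = gc - gw := by
      rw [hgw_def, hga_def, hgc_def, h5]; ring
    exact sub_pos.1 (pos_of_mul_pos_left (h10 ▸ h6) h9.le)
  rw [hw1]
  exact ⟨1 - s / s1, s / s1, by linarith, by positivity, by ring, by module⟩

/-! ### Chords -/

/-- The point of the open segment from `P` to `Q` with logarithmic parameter `u`. When `P`, `Q` are the
ends of a chord of `Ω`, this is a unit speed parametrization for the Hilbert metric, with `P`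
at `u = -∞` and `Q` at `u = ∞`. -/
def chordPt {n : ℕ} (P Q : Euc n) (u : ℝ) : Euc n :=
  (1 + Real.exp u)⁻¹ • (P + Real.exp u • Q)

/-- `P` and `Q` are the two boundary points of a chord of `Ω`. -/
structure IsChord {n : ℕ} (Ω : Set (Euc n)) (P Q : Euc n) : Prop where
  left : P ∈ frontier Ω
  right : Q ∈ frontier Ω
  mem : ∀ u, chordPt P Q u ∈ Ω

/-- A segment between two boundary points with one inner point in `Ω` is a chord. -/
lemma IsChord.of_mem {n : ℕ} {Ω : Set (Euc n)} (hop : IsOpen Ω) (hcv : Convex ℝ Ω) {P Q : Euc n}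
    (hP : P ∈ frontier Ω) (hQ : Q ∈ frontier Ω) {u₀ : ℝ} (h0 : chordPt P Q u₀ ∈ Ω) :
    IsChord Ω P Q := by
  refine ⟨hP, hQ, fun u => ?_⟩
  have hinner : chordPt P Q u₀ ∈ interior Ω := by rwa [hop.interior_eq]
  rw [← hop.interior_eq]
  have p0 := Real.exp_pos u₀
  have p1 := Real.exp_pos u
  rcases lt_trichotomy u u₀ with h | h | h
  · have h' := Real.exp_lt_exp.2 h
    refine hcv.openSegment_closure_interior_subset_interior (frontier_subset_closure hP) hinner ?_
    unfold chordPt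
    generalize Real.exp u = E at *
    generalize Real.exp u₀ = F at *
    refine ⟨(F - E) / (F * (1 + E)), E * (1 + F) / (F * (1 + E)), ?_, by positivity, ?_, ?_⟩
    · have := sub_pos.2 h'; positivity
    · field_simp; ring
    · match_scalars <;> field_simp
      ring
  · rwa [h]
  · have h' := Real.exp_lt_exp.2 h
    refine hcv.openSegment_closure_interior_subset_interior (frontier_subset_closure hQ) hinner ?_
    unfold chordPt
    generalize Real.exp u = E at *
    generalize Real.exp u₀ = F at *
    refine ⟨(E - F) / (1 + E), (1 + F) / (1 + E), ?_, by positivity, ?_, ?_⟩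
    · have := sub_pos.2 h'; positivity
    · field_simp; ring
    · match_scalars <;> field_simp
      ring

lemma IsChord.ne {n : ℕ} {Ω : Set (Euc n)} (hop : IsOpen Ω) {P Q : Euc n}
    (h : IsChord Ω P Q) : P ≠ Q := by
  rintro rfl
  have h0 := h.mem 0
  have : chordPt P P 0 = P := by
    unfold chordPt
    match_scalars
    norm_num
  rw [this] at h0
  exact h.left.2 (by rwa [hop.interior_eq])

lemma chordPt_sub {n : ℕ} (P Q : Euc n) (u u' : ℝ) :
    chordPt P Q u - chordPt P Q u' =
      ((Real.exp u - Real.exp u') / ((1 + Real.exp u) * (1 + Real.exp u'))) • (Q - P) := by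
  have p0 := Real.exp_pos u
  have p1 := Real.exp_pos u'
  unfold chordPt
  match_scalars <;> field_simp <;> ring

lemma chordPt_left {n : ℕ} (P Q : Euc n) {u u' : ℝ} (h : u < u') :
    P = chordPt P Q u + (Real.exp u * (1 + Real.exp u') / (Real.exp u' - Real.exp u)) •
      (chordPt P Q u - chordPt P Q u') := by
  have p0 := Real.exp_pos u
  have p1 := Real.exp_pos u'
  have h' := (sub_pos.2 (Real.exp_lt_exp.2 h)).ne'
  rw [chordPt_sub]
  unfold chordPt
  match_scalars <;> field_simp <;> ring

lemma chordPt_right {n : ℕ} (P Q : Euc n) {u u' : ℝ} (h : u < u') :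
    Q = chordPt P Q u' + ((1 + Real.exp u) / (Real.exp u' - Real.exp u)) •
      (chordPt P Q u' - chordPt P Q u) := by
  have p0 := Real.exp_pos u
  have p1 := Real.exp_pos u'
  have h' := (sub_pos.2 (Real.exp_lt_exp.2 h)).ne'
  rw [chordPt_sub]
  unfold chordPt
  match_scalars <;> field_simp <;> ring

lemma IsChord.injective {n : ℕ} {Ω : Set (Euc n)} (hop : IsOpen Ω) {P Q : Euc n}
    (h : IsChord Ω P Q) : Function.Injective (chordPt P Q) := by
  intro u u' huv
  have h1 := chordPt_sub P Q u u'
  rw [huv, sub_self] at h1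
  have p0 := Real.exp_pos u
  have p1 := Real.exp_pos u'
  rcases smul_eq_zero.1 h1.symm with h2 | h2
  · rw [div_eq_zero_iff] at h2
    rcases h2 with h2 | h2
    · exact Real.exp_injective (sub_eq_zero.1 h2)
    · exact absurd h2 (by positivity)
  · exact absurd (sub_eq_zero.1 h2).symm (h.ne hop)

lemma IsChord.dist_of_lt {n : ℕ} {Ω : Set (Euc n)} (hop : IsOpen Ω) (hcv : Convex ℝ Ω)
    {P Q : Euc n} (h : IsChord Ω P Q) {u u' : ℝ} (hlt : u < u') :
    hilbertDist Ω (chordPt P Q u) (chordPt P Q u') = u' - u ∧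
    hilbertDist Ω (chordPt P Q u') (chordPt P Q u) = u' - u := by
  have p0 := Real.exp_pos u
  have p1 := Real.exp_pos u'
  have h' := sub_pos.2 (Real.exp_lt_exp.2 hlt)
  have hne : chordPt P Q u ≠ chordPt P Q u' := fun hh => hlt.ne (h.injective hop hh)
  have hs : 0 < Real.exp u * (1 + Real.exp u') / (Real.exp u' - Real.exp u) := by positivity
  have ht : 0 < (1 + Real.exp u) / (Real.exp u' - Real.exp u) := by positivity
  have e : Real.log (1 + 1 / (Real.exp u * (1 + Real.exp u') / (Real.exp u' - Real.exp u))) +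
      Real.log (1 + 1 / ((1 + Real.exp u) / (Real.exp u' - Real.exp u))) = u' - u := by
    rw [← Real.log_mul (by positivity) (by positivity), ← Real.log_exp (u' - u), Real.exp_sub]
    congr 1
    field_simp
    ring
  constructor
  · rw [hilbertDist_eq hop hcv (h.mem u) (h.mem u') hne hs ht
      (by rw [← chordPt_left P Q hlt]; exact h.left)
      (by rw [← chordPt_right P Q hlt]; exact h.right), e]
  · rw [hilbertDist_eq hop hcv (h.mem u') (h.mem u) hne.symm ht hs
      (by rw [← chordPt_right P Q hlt]; exact h.right)
      (by rw [← chordPt_left P Q hlt]; exact h.left), add_comm, e]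

lemma IsChord.dist {n : ℕ} {Ω : Set (Euc n)} (hop : IsOpen Ω) (hcv : Convex ℝ Ω)
    {P Q : Euc n} (h : IsChord Ω P Q) (u u' : ℝ) :
    hilbertDist Ω (chordPt P Q u) (chordPt P Q u') = |u - u'| := by
  rcases lt_trichotomy u u' with hlt | rfl | hlt
  · rw [(h.dist_of_lt hop hcv hlt).1, abs_of_neg (by linarith)]; ring
  · simp [hilbertDist_self]
  · rw [(h.dist_of_lt hop hcv hlt).2, abs_of_pos (by linarith)]

lemma exists_chord {n : ℕ} {Ω : Set (Euc n)} (hop : IsOpen Ω) (hbd : Bornology.IsBounded Ω)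
    (hcv : Convex ℝ Ω) {x y : Euc n} (hx : x ∈ Ω) (hy : y ∈ Ω) (hne : x ≠ y) :
    ∃ P Q u u', IsChord Ω P Q ∧ u < u' ∧ x = chordPt P Q u ∧ y = chordPt P Q u' := by
  obtain ⟨s, hs, hs'⟩ := ray_exists hop hbd hx (sub_ne_zero.2 hne)
  obtain ⟨t, ht, ht'⟩ := ray_exists hop hbd hy (sub_ne_zero.2 hne.symm)
  have hxe : x = chordPt (x + s • (x - y)) (y + t • (y - x)) (Real.log (s / (1 + t))) := by
    unfold chordPt
    rw [Real.exp_log (by positivity)]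
    match_scalars <;> field_simp <;> ring
  have hye : y = chordPt (x + s • (x - y)) (y + t • (y - x)) (Real.log ((1 + s) / t)) := by
    unfold chordPt
    rw [Real.exp_log (by positivity)]
    match_scalars <;> field_simp <;> ring
  refine ⟨_, _, _, _, IsChord.of_mem hop hcv hs' ht' (hxe ▸ hx), ?_, hxe, hye⟩
  refine Real.log_lt_log (by positivity) ?_
  rw [div_lt_div_iff₀ (by positivity) ht]
  nlinarith

/-- Each point of `Ω` lies on a chord issuing from a given boundary point. -/
lemma exists_chord_from {n : ℕ} {Ω : Set (Euc n)} (hop : IsOpen Ω) (hbd : Bornology.IsBounded Ω)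
    (hcv : Convex ℝ Ω) {x e : Euc n} (hx : x ∈ Ω) (he : e ∈ frontier Ω) :
    ∃ Q u, IsChord Ω e Q ∧ x = chordPt e Q u := by
  have hne : x ≠ e := by
    rintro rfl
    exact he.2 (by rwa [hop.interior_eq])
  obtain ⟨s, hs, hs'⟩ := ray_exists hop hbd hx (sub_ne_zero.2 hne)
  have hxe : x = chordPt e (x + s • (x - e)) (Real.log (1 / s)) := by
    unfold chordPt
    rw [Real.exp_log (by positivity)]
    match_scalars <;> field_simp <;> ring
  exact ⟨_, _, IsChord.of_mem hop hcv he hs' (hxe ▸ hx), hxe⟩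

/-- Chords sharing two points in the same order have the same ends. -/
lemma IsChord.unique {n : ℕ} {Ω : Set (Euc n)} (hop : IsOpen Ω) (hcv : Convex ℝ Ω)
    {P Q P' Q' : Euc n} (h : IsChord Ω P Q) (h' : IsChord Ω P' Q') {a b a' b' : ℝ}
    (hab : a < b) (hab' : a' < b') (ha : chordPt P Q a = chordPt P' Q' a')
    (hb : chordPt P Q b = chordPt P' Q' b') : P = P' ∧ Q = Q' := by
  have key : ∀ u u' : ℝ, u < u' →
      0 < Real.exp u * (1 + Real.exp u') / (Real.exp u' - Real.exp u) ∧
      0 < (1 + Real.exp u) / (Real.exp u' - Real.exp u) := by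
    intro u u' huv
    have p0 := Real.exp_pos u
    have p1 := Real.exp_pos u'
    have h' := sub_pos.2 (Real.exp_lt_exp.2 huv)
    constructor <;> positivity
  have l1 := chordPt_left P Q hab
  have l2 := chordPt_left P' Q' hab'
  have r1 := chordPt_right P Q hab
  have r2 := chordPt_right P' Q' hab'
  rw [← ha, ← hb] at l2 r2
  constructor
  · have := ray_unique hop hcv (h.mem a) (key a b hab).1 (key a' b' hab').1
      (l1 ▸ h.left) (l2 ▸ h'.left)
    rw [l1, l2, this]
  · have := ray_unique hop hcv (h.mem b) (key a b hab).2 (key a' b' hab').2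
      (r1 ▸ h.right) (r2 ▸ h'.right)
    rw [r1, r2, this]

lemma hilbertDist_comm {n : ℕ} {Ω : Set (Euc n)} (hop : IsOpen Ω) (hbd : Bornology.IsBounded Ω)
    (hcv : Convex ℝ Ω) {x y : Euc n} (hx : x ∈ Ω) (hy : y ∈ Ω) :
    hilbertDist Ω x y = hilbertDist Ω y x := by
  by_cases hne : x = y
  · rw [hne]
  obtain ⟨P, Q, u, u', hc, -, rfl, rfl⟩ := exists_chord hop hbd hcv hx hy hne
  rw [hc.dist hop hcv, hc.dist hop hcv, abs_sub_comm]

lemma eq_of_hilbertDist_eq_zero {n : ℕ} {Ω : Set (Euc n)} (hop : IsOpen Ω)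
    (hbd : Bornology.IsBounded Ω) (hcv : Convex ℝ Ω) {x y : Euc n} (hx : x ∈ Ω) (hy : y ∈ Ω)
    (h : hilbertDist Ω x y = 0) : x = y := by
  by_contra hne
  obtain ⟨P, Q, u, u', hc, hlt, rfl, rfl⟩ := exists_chord hop hbd hcv hx hy hne
  rw [hc.dist hop hcv, abs_eq_zero] at h
  linarith

lemma segment_chordPt {n : ℕ} {P Q w : Euc n} {u u' : ℝ}
    (hw : w ∈ segment ℝ (chordPt P Q u) (chordPt P Q u')) : ∃ z, w = chordPt P Q z := by
  obtain ⟨a, b, ha, hb, hab, rfl⟩ := hw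
  have p0 := Real.exp_pos u
  have p1 := Real.exp_pos u'
  unfold chordPt
  generalize Real.exp u = E at *
  generalize Real.exp u' = F at *
  have hA : 0 < a * (1 + F) + b * (1 + E) := by
    rcases ha.lt_or_eq with h | h
    · positivity
    · have : b = 1 := by linarith
      rw [this, ← h]; linarith
  have hB : 0 < a * E * (1 + F) + b * F * (1 + E) := by
    rcases ha.lt_or_eq with h | h
    · positivity
    · have : b = 1 := by linarith
      rw [this, ← h]; simp; positivity
  refine ⟨Real.log ((a * E * (1 + F) + b * F * (1 + E)) / (a * (1 + F) + b * (1 + E))), ?_⟩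
  rw [Real.exp_log (by positivity)]
  have hb' : b = 1 - a := by linarith
  have hS : a * (1 + F) + b * (1 + E) + (a * E * (1 + F) + b * F * (1 + E)) =
      (1 + E) * (1 + F) := by rw [hb']; ring
  generalize hX : a * (1 + F) + b * (1 + E) = X at *
  generalize hY : a * E * (1 + F) + b * F * (1 + E) = Y at *
  have h1 : (1 + Y / X)⁻¹ = X / ((1 + E) * (1 + F)) := by
    rw [← hS]; field_simp
  rw [h1]
  match_scalars
  · rw [← hX]; field_simp
  · have : X / ((1 + E) * (1 + F)) * (Y / X * 1) = Y / ((1 + E) * (1 + F)) := by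
      field_simp
    rw [this, ← hY]; field_simp

/-- A chord with an extreme end contains all points metrically between two of its points. -/
lemma IsChord.rigid {n : ℕ} {Ω : Set (Euc n)} (hop : IsOpen Ω) (hbd : Bornology.IsBounded Ω)
    (hcv : Convex ℝ Ω) {P Q w : Euc n} (h : IsChord Ω P Q)
    (hext : P ∈ extremePoints ℝ (closure Ω)) {u u' : ℝ} (hlt : u < u') (hw : w ∈ Ω)
    (hd : hilbertDist Ω (chordPt P Q u) w + hilbertDist Ω w (chordPt P Q u') = u' - u) :
    ∃ z, w = chordPt P Q z := by
  have p0 := Real.exp_pos u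
  have p1 := Real.exp_pos u'
  have h' := sub_pos.2 (Real.exp_lt_exp.2 hlt)
  refine segment_chordPt (rigid_core hop hbd hcv (h.mem u) (h.mem u') hw
    (fun hh => hlt.ne (h.injective hop hh))
    (s := Real.exp u * (1 + Real.exp u') / (Real.exp u' - Real.exp u)) (by positivity)
    (by rw [← chordPt_left P Q hlt]; exact hext) (by rw [← chordPt_left P Q hlt]; exact h.left) ?_)
  rw [hd, (h.dist_of_lt hop hcv hlt).1]

/-- On a chord with an extreme end, a point is determined by its distances to two chord points
between which it lies metrically. -/
lemma IsChord.eq_of_dist {n : ℕ} {Ω : Set (Euc n)} (hop : IsOpen Ω) (hbd : Bornology.IsBounded Ω)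
    (hcv : Convex ℝ Ω) {P Q w : Euc n} (h : IsChord Ω P Q)
    (hext : P ∈ extremePoints ℝ (closure Ω)) {u₁ u u₂ : ℝ} (h12 : u₁ < u₂)
    (h1 : u₁ ≤ u) (hw : w ∈ Ω)
    (hd1 : hilbertDist Ω (chordPt P Q u₁) w = u - u₁)
    (hd2 : hilbertDist Ω w (chordPt P Q u₂) = u₂ - u) : w = chordPt P Q u := by
  obtain ⟨z, rfl⟩ := h.rigid hop hbd hcv hext h12 hw (by rw [hd1, hd2]; ring)
  rw [h.dist hop hcv] at hd1 hd2
  congr 1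
  rcases abs_cases (u₁ - z) with h3 | h3 <;> rcases abs_cases (z - u₂) with h4 | h4 <;> linarith

lemma tendsto_chordPt {n : ℕ} (P Q : Euc n) :
    Filter.Tendsto (chordPt P Q) Filter.atBot (nhds P) := by
  have h : ContinuousAt (fun E : ℝ => (1 + E)⁻¹ • (P + E • Q)) 0 := by
    have h1 : ContinuousAt (fun E : ℝ => (1 + E)⁻¹) 0 :=
      ContinuousAt.inv₀ (by fun_prop) (by simp)
    exact h1.smul (by fun_prop)
  have := h.tendsto.comp Real.tendsto_exp_atBot
  rwa [add_zero, inv_one, one_smul, zero_smul, add_zero] at this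

/-! ### Images of chords through focusing points -/

/-- An isometry maps each compact piece of a chord with an extreme end onto a piece of a chord:
the chord through the images of the end points pulls back to the original one by rigidity. -/
lemma image_chord_interval {n : ℕ} {Ω Ω' : Set (Euc n)}
    (hop : IsOpen Ω) (hbd : Bornology.IsBounded Ω) (hcv : Convex ℝ Ω)
    (hop' : IsOpen Ω') (hbd' : Bornology.IsBounded Ω') (hcv' : Convex ℝ Ω')
    {τ : Euc n → Euc n} (hτ : IsHilbertIsometry Ω Ω' τ) {P Q : Euc n} (h : IsChord Ω P Q)
    (hext : P ∈ extremePoints ℝ (closure Ω)) {u₁ u₂ : ℝ} (h12 : u₁ < u₂) :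
    ∃ P' Q' k, IsChord Ω' P' Q' ∧
      ∀ u, u₁ ≤ u → u ≤ u₂ → τ (chordPt P Q u) = chordPt P' Q' (u + k) := by
  obtain ⟨hmaps, hsurj, hiso⟩ := hτ
  have m1 := hmaps (h.mem u₁)
  have m2 := hmaps (h.mem u₂)
  have d12 : hilbertDist Ω' (τ (chordPt P Q u₁)) (τ (chordPt P Q u₂)) = u₂ - u₁ := by
    rw [hiso _ (h.mem _) _ (h.mem _), (h.dist_of_lt hop hcv h12).1]
  have hne : τ (chordPt P Q u₁) ≠ τ (chordPt P Q u₂) := by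
    intro hh
    rw [hh, hilbertDist_self] at d12
    linarith
  obtain ⟨P', Q', a, b, hc', hab, e1, e2⟩ := exists_chord hop' hbd' hcv' m1 m2 hne
  rw [e1, e2, (hc'.dist_of_lt hop' hcv' hab).1] at d12
  refine ⟨P', Q', a - u₁, hc', fun u hu1 hu2 => ?_⟩
  obtain ⟨w, hw, hwe⟩ := hsurj (hc'.mem (u + (a - u₁)))
  have hw' : w = chordPt P Q u := by
    refine h.eq_of_dist hop hbd hcv hext h12 hu1 hw ?_ ?_
    · rw [← hiso _ (h.mem _) _ hw, hwe, e1, hc'.dist hop' hcv', abs_of_nonpos (by linarith)]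
      ring
    · rw [← hiso _ hw _ (h.mem _), hwe, e2, hc'.dist hop' hcv', abs_of_nonpos (by linarith)]
      linarith
  rw [← hw', hwe]

/-- An isometry maps a chord with an extreme end onto a chord, shifting the parameter. -/
lemma image_chord {n : ℕ} {Ω Ω' : Set (Euc n)}
    (hop : IsOpen Ω) (hbd : Bornology.IsBounded Ω) (hcv : Convex ℝ Ω)
    (hop' : IsOpen Ω') (hbd' : Bornology.IsBounded Ω') (hcv' : Convex ℝ Ω')
    {τ : Euc n → Euc n} (hτ : IsHilbertIsometry Ω Ω' τ) {P Q : Euc n} (h : IsChord Ω P Q)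
    (hext : P ∈ extremePoints ℝ (closure Ω)) :
    ∃ P' Q' k, IsChord Ω' P' Q' ∧ ∀ u, τ (chordPt P Q u) = chordPt P' Q' (u + k) := by
  obtain ⟨P', Q', k, hc, hk⟩ := image_chord_interval hop hbd hcv hop' hbd' hcv' hτ h hext
    (zero_lt_one (α := ℝ))
  refine ⟨P', Q', k, hc, fun u => ?_⟩
  obtain ⟨P₂, Q₂, l, hc₂, hl⟩ := image_chord_interval hop hbd hcv hop' hbd' hcv' hτ h hext
    (u₁ := min 0 u) (u₂ := max 1 u)
    (lt_of_le_of_lt (min_le_left _ _) (lt_of_lt_of_le zero_lt_one (le_max_left _ _)))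
  have h0 : chordPt P' Q' (0 + k) = chordPt P₂ Q₂ (0 + l) := by
    rw [← hk 0 le_rfl zero_le_one, hl 0 (min_le_left _ _) (zero_le_one.trans (le_max_left _ _))]
  have h1 : chordPt P' Q' (1 + k) = chordPt P₂ Q₂ (1 + l) := by
    rw [← hk 1 zero_le_one le_rfl, hl 1 ((min_le_left _ _).trans zero_le_one) (le_max_left _ _)]
  obtain ⟨rfl, rfl⟩ := hc.unique hop' hcv' hc₂ (by linarith) (by linarith) h0 h1
  have := hc.injective hop' h0
  rw [hl u (min_le_right _ _) (le_max_right _ _)]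
  congr 1
  linarith

/-- A chord from `e` contains a ray converging to `e`, whose image converges to the initial end of
the image chord. -/
lemma chord_bdryLimit {n : ℕ} {Ω Ω' : Set (Euc n)} {τ : Euc n → Euc n} {e Q P' Q' : Euc n} {k : ℝ}
    (h : IsChord Ω e Q) (h' : IsChord Ω' P' Q')
    (hk : ∀ u, τ (chordPt e Q u) = chordPt P' Q' (u + k)) (hop : IsOpen Ω) :
    ∃ r, IsRayIn Ω r ∧ IsBdryLimit Ω r e ∧ IsBdryLimit Ω' (τ '' r) P' := by
  have hmem : ∀ u ≤ 0, chordPt e Q u ∈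
      {x | ∃ t : ℝ, 0 ≤ t ∧ x = chordPt e Q 0 + t • (e - chordPt e Q 0)} ∩ Ω := by
    intro u hu
    refine ⟨⟨(1 - Real.exp u) / (1 + Real.exp u), ?_, ?_⟩, h.mem u⟩
    · have := Real.exp_le_one_iff.2 hu
      have := Real.exp_pos u
      exact div_nonneg (by linarith) (by linarith)
    · have := Real.exp_pos u
      unfold chordPt
      rw [Real.exp_zero]
      match_scalars <;> field_simp <;> ring
  refine ⟨_, ⟨chordPt e Q 0, h.mem 0, e - chordPt e Q 0, ?_, rfl⟩, ⟨h.left, ?_⟩, h'.left, ?_⟩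
  · intro hh
    have := h.mem 0
    rw [← sub_eq_zero.1 hh] at this
    exact h.left.2 (by rwa [hop.interior_eq])
  · refine mem_closure_of_tendsto (tendsto_chordPt e Q) ?_
    filter_upwards [Filter.eventually_le_atBot 0] with u hu using hmem u hu
  · refine mem_closure_of_tendsto ((tendsto_chordPt P' Q').comp
      (Filter.tendsto_atBot_add_const_right _ k Filter.tendsto_id)) ?_
    filter_upwards [Filter.eventually_le_atBot 0] with u hu
    exact ⟨_, hmem u hu, hk u⟩

/-- The images of all chords issuing from a focusing point `e` issue from one common point `e'`. -/
lemma focusing_chords {n : ℕ} {Ω Ω' : Set (Euc n)} (hne : Ω.Nonempty)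
    (hop : IsOpen Ω) (hbd : Bornology.IsBounded Ω) (hcv : Convex ℝ Ω)
    (hop' : IsOpen Ω') (hbd' : Bornology.IsBounded Ω') (hcv' : Convex ℝ Ω')
    {τ : Euc n → Euc n} (hτ : IsHilbertIsometry Ω Ω' τ) {e : Euc n}
    (he : e ∈ frontier Ω) (hfoc : IsFocusingPoint Ω Ω' τ e) :
    ∃ e', ∀ Q, IsChord Ω e Q →
      ∃ Q' k, IsChord Ω' e' Q' ∧ ∀ u, τ (chordPt e Q u) = chordPt e' Q' (u + k) := by
  obtain ⟨x, hx⟩ := hne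
  obtain ⟨Q₀, u₀, hc₀, -⟩ := exists_chord_from hop hbd hcv hx he
  obtain ⟨e', Q₀', k₀, hc₀', hk₀⟩ := image_chord hop hbd hcv hop' hbd' hcv' hτ hc₀ hfoc.1
  obtain ⟨r₀, hr₀, hr₀e, hr₀'⟩ := chord_bdryLimit hc₀ hc₀' hk₀ hop
  refine ⟨e', fun Q hc => ?_⟩
  obtain ⟨P', Q', k, hc', hk⟩ := image_chord hop hbd hcv hop' hbd' hcv' hτ hc hfoc.1
  obtain ⟨r, hr, hre, hr'⟩ := chord_bdryLimit hc hc' hk hop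
  have := hfoc.2 r₀ r hr₀ hr hr₀e hre _ _ hr₀' hr'
  subst this
  exact ⟨Q', k, hc', hk⟩

/-- `τ` maps chords through `e` to chords through `e₁`, in homogeneous form. Writing `(x, 1)` for the
lift of `x`, the points on the line through `x` and `e` have lifts proportional to
`(x, 1) + t (e, 1)`; the image then has lift proportional to `(τ x, 1) + t a (e₁, 1)`, where `a`
depends on `x` only. -/
def MovesTo {n : ℕ} (Ω : Set (Euc n)) (τ : Euc n → Euc n) (e e₁ : Euc n) : Prop :=
  ∀ x ∈ Ω, ∃ a : ℝ, 0 < a ∧ ∀ t : ℝ, ∀ y ∈ Ω, (1 + t) • y = x + t • e →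
    0 < 1 + t * a ∧ (1 + t * a) • τ y = τ x + (t * a) • e₁

/-- A focusing point `e` is the centre of a pencil of chords which `τ` maps to the pencil of some `e'`.
The shift `u ↦ u + k` of the logarithmic parameter becomes multiplication of `t` by a constant. -/
lemma focusing_movesTo {n : ℕ} {Ω Ω' : Set (Euc n)} (hne : Ω.Nonempty)
    (hop : IsOpen Ω) (hbd : Bornology.IsBounded Ω) (hcv : Convex ℝ Ω)
    (hop' : IsOpen Ω') (hbd' : Bornology.IsBounded Ω') (hcv' : Convex ℝ Ω')
    {τ : Euc n → Euc n} (hτ : IsHilbertIsometry Ω Ω' τ) {e : Euc n}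
    (he : e ∈ frontier Ω) (hfoc : IsFocusingPoint Ω Ω' τ e) : ∃ e', MovesTo Ω τ e e' := by
  obtain ⟨e', H⟩ := focusing_chords hne hop hbd hcv hop' hbd' hcv' hτ he hfoc
  have heΩ : e ∉ Ω := fun h => he.2 (by rwa [hop.interior_eq])
  refine ⟨e', fun x hx => ?_⟩
  obtain ⟨Q, u₀, hc, rfl⟩ := exists_chord_from hop hbd hcv hx he
  obtain ⟨Q', k, hc', hk⟩ := H Q hc
  have pu := Real.exp_pos u₀
  have puk := Real.exp_pos (u₀ + k)
  refine ⟨(1 + Real.exp u₀) / (1 + Real.exp (u₀ + k)), by positivity, fun t y hy hty => ?_⟩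
  have ht : 0 < 1 + t := by
    by_contra hcon
    push Not at hcon
    apply heΩ
    have ht0 : 0 < -t := by linarith
    have htne : t ≠ 0 := by linarith
    have : e = (1 / -t) • chordPt e Q u₀ + ((-(1 + t)) / -t) • y := by
      have h1 : (-(1 + t)) • y = - (chordPt e Q u₀ + t • e) := by rw [← hty]; module
      rw [div_eq_inv_mul (-(1 + t)), mul_smul, h1]
      generalize chordPt e Q u₀ = z
      match_scalars <;> field_simp
      ring
    rw [this]
    exact hcv hx hy (by positivity) (div_nonneg (by linarith) ht0.le)
      (by field_simp; ring)
  have hkey : 0 < 1 + t * (1 + Real.exp u₀) := by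
    by_contra hcon
    push Not at hcon
    -- otherwise `Q` would lie between `e` and `y`
    have hQ : Q ∈ Ω := by
      have e1 : Q = ((1 + Real.exp u₀) * (1 + t) / Real.exp u₀) • y +
          (-(1 + t * (1 + Real.exp u₀)) / Real.exp u₀) • e := by
        have h1 : ((1 + Real.exp u₀) * (1 + t) / Real.exp u₀) • y =
          ((1 + Real.exp u₀) / Real.exp u₀) • (chordPt e Q u₀ + t • e) := by
          rw [← hty, smul_smul]; congr 1; field_simp
        rw [h1]
        unfold chordPt
        generalize Real.exp u₀ = E at *
        match_scalars <;> field_simp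
        ring
      rcases hcon.lt_or_eq with hlt | heq
      · rw [← hop.interior_eq]
        refine hcv.openSegment_interior_closure_subset_interior (by rwa [hop.interior_eq])
          (frontier_subset_closure he) ⟨_, _, ?_, ?_, ?_, e1.symm⟩
        · positivity
        · exact div_pos (by linarith) pu
        · field_simp; ring
      · rw [heq] at e1
        have h2 : (1 + Real.exp u₀) * (1 + t) / Real.exp u₀ = 1 := by
          field_simp; linarith
        rw [h2] at e1
        simp only [neg_zero, zero_div, zero_smul, add_zero, one_smul] at e1
        rwa [e1]
    exact hc.right.2 (by rwa [hop.interior_eq])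
  have hyc : y = chordPt e Q (u₀ - Real.log (1 + t * (1 + Real.exp u₀))) := by
    have h1 : y = (1 + t)⁻¹ • (chordPt e Q u₀ + t • e) := by
      rw [← hty, smul_smul, inv_mul_cancel₀ ht.ne', one_smul]
    rw [h1]
    unfold chordPt
    rw [Real.exp_sub, Real.exp_log hkey]
    generalize hE : Real.exp u₀ = E at *
    generalize hG : 1 + t * (1 + E) = G at *
    have h3 : G + E = (1 + t) * (1 + E) := by rw [← hG]; ring
    have h4 : (1 + E / G)⁻¹ = G / ((1 + t) * (1 + E)) := by
      rw [← h3]; field_simp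
    rw [h4]
    match_scalars
    · rw [← hG]; field_simp
    · field_simp
  have e1 : 1 + t * ((1 + Real.exp u₀) / (1 + Real.exp (u₀ + k))) =
      ((1 + t * (1 + Real.exp u₀)) + Real.exp (u₀ + k)) / (1 + Real.exp (u₀ + k)) := by
    field_simp; ring
  refine ⟨by rw [e1]; positivity, ?_⟩
  rw [hk, hyc, hk]
  unfold chordPt
  rw [show u₀ - Real.log (1 + t * (1 + Real.exp u₀)) + k =
    u₀ + k - Real.log (1 + t * (1 + Real.exp u₀)) by ring, Real.exp_sub, Real.exp_log hkey, e1]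
  generalize Real.exp (u₀ + k) = K at *
  generalize Real.exp u₀ = E at *
  generalize hG : 1 + t * (1 + E) = G at *
  have h5 : (G + K) / (1 + K) * (1 + K / G)⁻¹ = G / (1 + K) := by field_simp
  rw [smul_smul, h5]
  match_scalars
  · rw [← hG]; field_simp
  · field_simp

/-- Small Hilbert balls around `p` are contained in small Euclidean balls. -/
lemma near_of_hilbertDist {n : ℕ} {Ω : Set (Euc n)} (hop : IsOpen Ω)
    (hbd : Bornology.IsBounded Ω) (hcv : Convex ℝ Ω) {p : Euc n} (hp : p ∈ Ω) {r : ℝ}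
    (hr : 0 < r) : ∃ δ > 0, ∀ x ∈ Ω, hilbertDist Ω x p < δ → dist x p < r := by
  obtain ⟨R, hR⟩ := hbd.closure.exists_norm_le
  have hR0 : 0 ≤ R := (norm_nonneg p).trans (hR p (subset_closure hp))
  refine ⟨Real.log (1 + r / (2 * R + 1)), Real.log_pos (by
    have : 0 < r / (2 * R + 1) := by positivity
    linarith), fun x hx hd => ?_⟩
  by_cases hne : x = p
  · rw [hne, dist_self]; exact hr
  obtain ⟨s, hs, hs'⟩ := ray_exists hop hbd hx (sub_ne_zero.2 hne)
  obtain ⟨t, ht, ht'⟩ := ray_exists hop hbd hp (sub_ne_zero.2 (Ne.symm hne))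
  rw [hilbertDist_eq hop hcv hx hp hne hs ht hs' ht'] at hd
  have h1 : 0 < Real.log (1 + 1 / s) := Real.log_pos (by
    have : 0 < 1 / s := by positivity
    linarith)
  have h2 : 1 + 1 / t < 1 + r / (2 * R + 1) :=
    (Real.log_lt_log_iff (by positivity) (by positivity)).1 (by linarith)
  have h3 : t * ‖p - x‖ ≤ 2 * R := by
    have h4 := norm_sub_le (p + t • (p - x)) p
    rw [add_sub_cancel_left, norm_smul, Real.norm_of_nonneg ht.le] at h4
    have := hR _ (frontier_subset_closure ht')
    have := hR _ (subset_closure hp)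
    linarith
  rw [dist_comm, dist_eq_norm]
  have h5 : 2 * R + 1 < r * t := by
    have : 1 / t < r / (2 * R + 1) := by linarith
    rw [div_lt_div_iff₀ ht (by positivity)] at this
    linarith
  by_contra hcon
  push Not at hcon
  nlinarith

/-! ### Homogeneous coordinates -/

/-- The lift `(x, 1)` of `x` to homogeneous coordinates. -/
def hat {n : ℕ} (x : Euc n) : Fin (n + 1) → ℝ := Fin.snoc (fun i => x i) 1

@[simp] lemma hat_last {n : ℕ} (x : Euc n) : hat x (Fin.last n) = 1 := by simp [hat]

@[simp] lemma hat_castSucc {n : ℕ} (x : Euc n) (i : Fin n) : hat x i.castSucc = x i := by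
  simp [hat]

lemma hat_ne_zero {n : ℕ} (x : Euc n) : hat x ≠ 0 := fun h => by
  simpa using congrFun h (Fin.last n)

lemma hat_injective {n : ℕ} : Function.Injective (hat : Euc n → Fin (n + 1) → ℝ) := by
  intro x y h
  ext i
  simpa using congrFun h i.castSucc

lemma continuous_hat {n : ℕ} : Continuous (hat : Euc n → Fin (n + 1) → ℝ) := by
  refine continuous_pi fun i => ?_
  refine Fin.lastCases ?_ (fun i => ?_) i
  · simp only [hat_last]; exact continuous_const
  · simp only [hat_castSucc]; fun_prop

lemma hat_smul_eq {n : ℕ} {x y e : Euc n} {t : ℝ} (h : (1 + t) • y = x + t • e) :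
    (1 + t) • hat y = hat x + t • hat e := by
  ext i
  refine Fin.lastCases ?_ (fun i => ?_) i
  · simp
  · have := congrArg (fun z : Euc n => z i) h
    simpa using this

lemma sum_smul_hat {n : ℕ} {ι : Type*} (s : Finset ι) (c : ι → ℝ) (v : ι → Euc n) (i : Fin n) :
    (∑ k ∈ s, c k • hat (v k)) i.castSucc = (∑ k ∈ s, c k • v k) i := by
  simp

lemma hat_chordPt {n : ℕ} (P Q : Euc n) (u : ℝ) :
    (1 + Real.exp u) • hat (chordPt P Q u) = hat P + Real.exp u • hat Q := by
  apply hat_smul_eq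
  have := Real.exp_pos u
  unfold chordPt
  rw [smul_smul, mul_inv_cancel₀ (by positivity), one_smul]

/-- The lifts of the points of a nonempty open set span `ℝⁿ⁺¹`, stated dually. -/
lemma eq_zero_of_hat {n : ℕ} {U : Set (Euc n)} (hU : IsOpen U) (hne : U.Nonempty)
    {f : (Fin (n + 1) → ℝ) →ₗ[ℝ] ℝ} (hf : ∀ x ∈ U, f (hat x) = 0) : f = 0 := by
  obtain ⟨x₀, hx₀⟩ := hne
  have key : ∀ d : Euc n, f (Fin.snoc (fun i => d i) 0) = 0 := by
    intro d
    have hcont : Continuous fun t : ℝ => x₀ + t • d := by fun_prop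
    have : ∀ᶠ t in nhds (0 : ℝ), x₀ + t • d ∈ U :=
      hcont.continuousAt.eventually_mem (hU.mem_nhds (by simpa using hx₀))
    obtain ⟨r, hr, hr'⟩ := Metric.eventually_nhds_iff.1 this
    have h1 := hf _ (hr' (y := r / 2) (by
      rw [Real.dist_eq, sub_zero, abs_of_pos (by positivity)]; linarith))
    have h2 : hat (x₀ + (r / 2) • d) =
        hat x₀ + (r / 2) • (Fin.snoc (fun i => d i) 0 : Fin (n + 1) → ℝ) := by
      ext i
      refine Fin.lastCases ?_ (fun i => ?_) i <;> simp
    rw [h2, map_add, hf x₀ hx₀, map_smul, zero_add, smul_eq_mul] at h1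
    exact (mul_eq_zero.1 h1).resolve_left (by positivity)
  ext1 k
  refine LinearMap.ext fun c => ?_
  have hdec : ∀ z : Fin (n + 1) → ℝ, f z = 0 := by
    intro z
    have : z = z (Fin.last n) • hat x₀ + (Fin.snoc (fun i =>
        (WithLp.toLp 2 (fun i : Fin n => z i.castSucc - z (Fin.last n) * x₀ i) : Euc n) i) 0 :
          Fin (n + 1) → ℝ) := by
      ext i
      refine Fin.lastCases ?_ (fun i => ?_) i <;> simp
    rw [this, map_add, map_smul, hf x₀ hx₀, key]; simp
  simp [hdec]

/-- The lifts of `n + 1` affinely independent points form a basis, so one of them can be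
exchanged for the lift of `p`. -/
lemma exists_frame {n : ℕ} {v : Fin (n + 1) → Euc n} (hv : AffineIndependent ℝ v) (p : Euc n) :
    ∃ j : Fin (n + 1), LinearIndependent ℝ
      (Fin.cons (hat p) (fun i : Fin n => hat (v (j.succAbove i))) :
        Fin (n + 1) → Fin (n + 1) → ℝ) := by
  have hlin : LinearIndependent ℝ (fun i => hat (v i)) := by
    rw [Fintype.linearIndependent_iff]
    intro c hc i
    refine (affineIndependent_iff.1 hv) Finset.univ c ?_ ?_ i (Finset.mem_univ i)
    · have := congrFun hc (Fin.last n)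
      simpa using this
    · ext k
      have := congrFun hc k.castSucc
      rw [sum_smul_hat] at this
      simpa using this
  let B := basisOfLinearIndependentOfCardEqFinrank hlin (by simp)
  have hB : ∀ i, B i = hat (v i) := fun i => by simp [B]
  obtain ⟨j, hj⟩ : ∃ j, B.coord j (hat p) ≠ 0 := by
    by_contra hcon
    push Not at hcon
    exact hat_ne_zero p (B.ext_elem fun i => by simpa using hcon i)
  refine ⟨j, linearIndependent_finCons.2
    ⟨hlin.comp _ (Fin.succAbove_right_injective), fun hmem => hj ?_⟩⟩
  have hle : Submodule.span ℝ (Set.range fun i : Fin n => hat (v (j.succAbove i))) ≤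
      LinearMap.ker (B.coord j) := by
    rw [Submodule.span_le]
    rintro _ ⟨i, rfl⟩
    change B.coord j (hat (v (j.succAbove i))) = 0
    rw [← hB]
    simp
  exact hle hmem

/-- The point with projective coordinates `[1 : y₁ : … : yₙ]` in the frame given by the lifts of `p` and
of the `wᵢ`. It is meaningful when `1 + ∑ yᵢ ≠ 0`. -/
def bary {n : ℕ} (p : Euc n) (w : Fin n → Euc n) (y : Fin n → ℝ) : Euc n :=
  (1 + ∑ i, y i)⁻¹ • (p + ∑ i, y i • w i)

lemma bary_zero {n : ℕ} (p : Euc n) (w : Fin n → Euc n) : bary p w 0 = p := by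
  simp [bary]

lemma hat_bary {n : ℕ} (p : Euc n) (w : Fin n → Euc n) {y : Fin n → ℝ} (hy : 1 + ∑ i, y i ≠ 0) :
    (1 + ∑ i, y i) • hat (bary p w y) = hat p + ∑ i, y i • hat (w i) := by
  ext i
  refine Fin.lastCases ?_ (fun i => ?_) i
  · simp
  · rw [Pi.add_apply, sum_smul_hat, Pi.smul_apply, hat_castSucc, hat_castSucc]
    unfold bary
    rw [PiLp.smul_apply, smul_smul, mul_inv_cancel₀ hy, one_smul, PiLp.add_apply]

/-- Small projective coordinates give points of `Ω`. -/
lemma bary_box {n : ℕ} {Ω : Set (Euc n)} (hop : IsOpen Ω) {p : Euc n} (hp : p ∈ Ω)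
    (w : Fin n → Euc n) : ∃ ε > 0, ∀ y : Fin n → ℝ, (∀ i, |y i| < ε) →
      0 < 1 + ∑ i, y i ∧ bary p w y ∈ Ω := by
  have h1 : ContinuousAt (fun y : Fin n → ℝ => 1 + ∑ i, y i) 0 := by fun_prop
  have h2 : ContinuousAt (bary p w) 0 := by
    have h3 : ContinuousAt (fun y : Fin n → ℝ => (1 + ∑ i, y i)⁻¹) 0 := h1.inv₀ (by simp)
    have h4 : ContinuousAt (fun y : Fin n → ℝ => p + ∑ i, y i • w i) 0 :=
      (continuous_const.add (continuous_finsetSum _ fun i _ => by fun_prop)).continuousAt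
    exact h3.smul h4
  have e1 : ∀ᶠ y in nhds (0 : Fin n → ℝ), 0 < 1 + ∑ i, y i :=
    h1.eventually (lt_mem_nhds (by simp))
  have e2 : ∀ᶠ y in nhds (0 : Fin n → ℝ), bary p w y ∈ Ω :=
    h2.eventually_mem (hop.mem_nhds (by rwa [bary_zero]))
  obtain ⟨ε, hε, h⟩ := Metric.eventually_nhds_iff.1 (e1.and e2)
  refine ⟨ε, hε, fun y hy => h ?_⟩
  rw [dist_zero_right, pi_norm_lt_iff hε]
  exact hy

/-- All points near `p` have small projective coordinates. -/
lemma bary_surj {n : ℕ} (p : Euc n) (w : Fin n → Euc n)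
    (hlin : LinearIndependent ℝ (Fin.cons (hat p) (fun i : Fin n => hat (w i)) :
        Fin (n + 1) → Fin (n + 1) → ℝ)) {ε : ℝ} (hε : 0 < ε) :
    ∀ᶠ x in nhds p, ∃ y : Fin n → ℝ, (∀ i, |y i| < ε) ∧ x = bary p w y := by
  let B := basisOfLinearIndependentOfCardEqFinrank hlin (by simp)
  have hB0 : B 0 = hat p := by simp [B]
  have hBs : ∀ i : Fin n, B i.succ = hat (w i) := fun i => by simp [B]
  have hc : ∀ k, Continuous fun x : Euc n => B.coord k (hat x) := fun k =>
    (LinearMap.continuous_of_finiteDimensional (B.coord k)).comp continuous_hat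
  have h0 : B.coord 0 (hat p) = 1 := by rw [← hB0]; simp
  have hs : ∀ i : Fin n, B.coord i.succ (hat p) = 0 := fun i => by
    rw [← hB0]; simp
  have e0 : ∀ᶠ x in nhds p, B.coord 0 (hat x) ≠ 0 :=
    (hc 0).continuousAt.eventually_ne (by rw [h0]; exact one_ne_zero)
  have e1 : ∀ᶠ x in nhds p, ∀ i : Fin n, |B.coord i.succ (hat x) / B.coord 0 (hat x)| < ε := by
    rw [Filter.eventually_all]
    intro i
    have : ContinuousAt (fun x => |B.coord i.succ (hat x) / B.coord 0 (hat x)|) p :=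
      ((hc i.succ).continuousAt.div (hc 0).continuousAt (by rw [h0]; exact one_ne_zero)).abs
    exact this.eventually (gt_mem_nhds (by simpa [hs i] using hε))
  filter_upwards [e0, e1] with x hx0 hx1
  refine ⟨_, hx1, ?_⟩
  set c := B.coord 0 (hat x) with hcdef
  have hsum : hat x = c • (hat p + ∑ i : Fin n, (B.coord i.succ (hat x) / c) • hat (w i)) := by
    conv_lhs => rw [← B.sum_repr (hat x)]
    rw [Fin.sum_univ_succ, hB0, smul_add, Finset.smul_sum]
    congr 1
    refine Finset.sum_congr rfl fun i _ => ?_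
    rw [hBs, smul_smul, mul_div_cancel₀ _ hx0]
    rfl
  have hlast : 1 = c * (1 + ∑ i : Fin n, B.coord i.succ (hat x) / c) := by
    have := congrFun hsum (Fin.last n)
    simpa using this
  have hne : 1 + ∑ i : Fin n, B.coord i.succ (hat x) / c ≠ 0 := by
    intro h; rw [h] at hlast; simp at hlast
  apply hat_injective
  calc hat x = c • (hat p + ∑ i : Fin n, (B.coord i.succ (hat x) / c) • hat (w i)) := hsum
    _ = c • ((1 + ∑ i : Fin n, B.coord i.succ (hat x) / c) •
          hat (bary p w fun i => B.coord i.succ (hat x) / c)) := by rw [hat_bary p w hne]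
    _ = hat (bary p w fun i => B.coord i.succ (hat x) / c) := by
        rw [smul_smul, ← hlast, one_smul]

/-- A property passes from `y₀` to `y` in a cube if it is preserved when a single coordinate in
which they differ is replaced by that of `y`. -/
lemma box_induct {n : ℕ} {ε : ℝ} (R : (Fin n → ℝ) → Prop) {y₀ y : Fin n → ℝ}
    (hy₀ : ∀ i, |y₀ i| < ε) (hy : ∀ i, |y i| < ε) (h0 : R y₀)
    (hstep : ∀ z : Fin n → ℝ, (∀ i, |z i| < ε) → ∀ k, y₀ k ≠ y k → R z →
      R (Function.update z k (y k))) : R y := by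
  have key : ∀ S : Finset (Fin n), R (S.piecewise y y₀) := by
    intro S
    induction S using Finset.induction_on with
    | empty => simpa using h0
    | insert k S hk ih =>
      rw [Finset.piecewise_insert]
      by_cases he : y₀ k = y k
      · have : Function.update (S.piecewise y y₀) k (y k) = S.piecewise y y₀ := by
          rw [← he, ← Finset.piecewise_eq_of_notMem S y y₀ hk, Function.update_eq_self]
        rwa [this]
      · refine hstep _ (fun i => ?_) k he ih
        by_cases hi : i ∈ S
        · rw [Finset.piecewise_eq_of_mem _ _ _ hi]; exact hy i
        · rw [Finset.piecewise_eq_of_notMem _ _ _ hi]; exact hy₀ i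
  simpa using key Finset.univ

/-- Changing the projective coordinate `k` moves the point along the line through `w k`. -/
lemma bary_update {n : ℕ} (p : Euc n) (w : Fin n → Euc n) {y : Fin n → ℝ} {k : Fin n} {s : ℝ}
    (h1 : 0 < 1 + ∑ i, y i) (h2 : 0 < 1 + ∑ i, Function.update y k s i) :
    (1 + (s - y k) / (1 + ∑ i, y i)) • bary p w (Function.update y k s) =
      bary p w y + ((s - y k) / (1 + ∑ i, y i)) • w k := by
  have e1 : ∑ i, Function.update y k s i = ∑ i, y i + (s - y k) := by
    rw [Finset.sum_update_of_mem (Finset.mem_univ k),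
      ← Finset.sum_sdiff (Finset.subset_univ {k}) (f := y)]
    simp; ring
  have e2 : ∑ i, Function.update y k s i • w i = ∑ i, y i • w i + (s - y k) • w k := by
    rw [← Finset.sum_sdiff (Finset.subset_univ {k}) (f := fun i => y i • w i),
      ← Finset.sum_sdiff (Finset.subset_univ {k}) (f := fun i => Function.update y k s i • w i)]
    have : ∑ i ∈ Finset.univ \ {k}, Function.update y k s i • w i =
        ∑ i ∈ Finset.univ \ {k}, y i • w i := by
      refine Finset.sum_congr rfl fun i hi => ?_
      rw [Function.update_of_ne (by simpa using hi)]
    rw [this]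
    simp only [Finset.sum_singleton, Function.update_self]
    module
  unfold bary
  rw [e1] at h2 ⊢
  rw [e2]
  generalize ∑ i, y i • w i = W
  generalize ∑ i, y i = σ at *
  have h3 : 1 + (σ + (s - y k)) ≠ 0 := h2.ne'
  have h4 : (1 + (s - y k) / (1 + σ)) * (1 + (σ + (s - y k)))⁻¹ = (1 + σ)⁻¹ := by
    field_simp; ring
  rw [smul_smul, h4]
  match_scalars <;> field_simp

/-! ### Local and global projectivity -/

/-- The image under `τ` of a change of one projective coordinate: up to a positive factor, the
lift moves by a multiple of the lift of the corresponding target vertex. -/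
lemma hat_move {n : ℕ} {Ω : Set (Euc n)} {τ : Euc n → Euc n} {p : Euc n} {w w' : Fin n → Euc n}
    {k : Fin n} (hmv : MovesTo Ω τ (w k) (w' k)) {y : Fin n → ℝ} {s : ℝ}
    (h1 : 0 < 1 + ∑ i, y i) (h2 : 0 < 1 + ∑ i, Function.update y k s i)
    (m1 : bary p w y ∈ Ω) (m2 : bary p w (Function.update y k s) ∈ Ω) :
    ∃ m > (0 : ℝ), ∃ c : ℝ, m • hat (τ (bary p w (Function.update y k s))) =
      hat (τ (bary p w y)) + c • hat (w' k) := by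
  obtain ⟨a, -, h⟩ := hmv _ m1
  obtain ⟨hm, he⟩ := h _ _ m2 (bary_update p w h1 h2)
  exact ⟨_, hm, _, hat_smul_eq he⟩

lemma abs_update_lt {n : ℕ} {ε : ℝ} {z : Fin n → ℝ} (hz : ∀ i, |z i| < ε) (k : Fin n) {s : ℝ}
    (hs : |s| < ε) (i : Fin n) : |Function.update z k s i| < ε := by
  rcases eq_or_ne i k with rfl | hik
  · simpa using hs
  · rw [Function.update_of_ne hik]; exact hz i

/-- The image frame is again a frame. Otherwise a nonzero linear functional would vanish on it,
hence on the lift of `τ x` for all `x` near `p`. These `τ x` contain a piece of each chord of `Ω'`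
through `τ p`, so the functional would vanish on the lift of all of `Ω'`. -/
lemma linearIndependent_image {n : ℕ} {Ω Ω' : Set (Euc n)}
    (hop : IsOpen Ω) (hbd : Bornology.IsBounded Ω) (hcv : Convex ℝ Ω)
    (hop' : IsOpen Ω') (hbd' : Bornology.IsBounded Ω') (hcv' : Convex ℝ Ω')
    {τ : Euc n → Euc n} (hτ : IsHilbertIsometry Ω Ω' τ) {p : Euc n} (hp : p ∈ Ω)
    {w w' : Fin n → Euc n} (hmv : ∀ k, MovesTo Ω τ (w k) (w' k))
    (hlin : LinearIndependent ℝ (Fin.cons (hat p) (fun i : Fin n => hat (w i)) :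
        Fin (n + 1) → Fin (n + 1) → ℝ)) :
    LinearIndependent ℝ (Fin.cons (hat (τ p)) (fun i : Fin n => hat (w' i)) :
        Fin (n + 1) → Fin (n + 1) → ℝ) := by
  refine linearIndependent_of_top_le_span_of_card_eq_finrank ?_ (by simp)
  by_contra hcon
  obtain ⟨f, hf0, hf⟩ := Submodule.exists_le_ker_of_lt_top _ (lt_top_iff_ne_top.2
    fun h => hcon h.ge)
  have hfq : f (hat (τ p)) = 0 := hf (Submodule.subset_span ⟨0, rfl⟩)
  have hfw : ∀ i, f (hat (w' i)) = 0 := fun i => hf (Submodule.subset_span ⟨i.succ, rfl⟩)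
  obtain ⟨ε, hε, hbox⟩ := bary_box hop hp w
  have hnear : ∀ y : Fin n → ℝ, (∀ i, |y i| < ε) → f (hat (τ (bary p w y))) = 0 := by
    intro y hy
    refine box_induct (ε := ε) (fun y => f (hat (τ (bary p w y))) = 0) (y₀ := 0)
      (by simpa using fun _ => hε) hy (by rw [bary_zero]; exact hfq) ?_
    intro z hz k _ hR
    have hz' := abs_update_lt hz k (hy k)
    obtain ⟨m, hm, c, h⟩ := hat_move (hmv k) (hbox z hz).1 (hbox _ hz').1 (hbox z hz).2
      (hbox _ hz').2
    have h' := congrArg f h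
    rw [map_smul, map_add, map_smul, hR, hfw] at h'
    simpa [hm.ne'] using h'
  obtain ⟨r, hr, hr'⟩ := Metric.eventually_nhds_iff.1 (bary_surj p w hlin hε)
  obtain ⟨δ, hδ, hδ'⟩ := near_of_hilbertDist hop hbd hcv hp hr
  have hq : τ p ∈ Ω' := hτ.1 hp
  refine hf0 (eq_zero_of_hat hop' ⟨_, hq⟩ fun y' hy' => ?_)
  rcases eq_or_ne (τ p) y' with rfl | hne
  · exact hfq
  obtain ⟨P, Q, a, b, hc, hlt, ha, rfl⟩ := exists_chord hop' hbd' hcv' hq hy' hne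
  obtain ⟨x, hx, hxz⟩ := hτ.2.1 (hc.mem (a + δ / 2))
  have hd : hilbertDist Ω x p < δ := by
    rw [← hτ.2.2 x hx p hp, hxz, ha, hc.dist hop' hcv', add_sub_cancel_left,
      abs_of_pos (by positivity)]
    linarith
  obtain ⟨y, hy, hxy⟩ := hr' (hδ' x hx hd)
  have hfz : f (hat (chordPt P Q (a + δ / 2))) = 0 := by
    rw [← hxz, hxy]; exact hnear y hy
  rw [ha] at hfq
  have e1 := congrArg f (hat_chordPt P Q a)
  have e2 := congrArg f (hat_chordPt P Q (a + δ / 2))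
  have e3 := congrArg f (hat_chordPt P Q b)
  simp only [map_smul, map_add, hfq, hfz, smul_eq_mul, mul_zero] at e1 e2 e3
  have hexp : Real.exp (a + δ / 2) - Real.exp a ≠ 0 :=
    (sub_pos.2 (Real.exp_lt_exp.2 (by linarith))).ne'
  have hQ : f (hat Q) = 0 := by
    have : (Real.exp (a + δ / 2) - Real.exp a) * f (hat Q) = 0 := by linarith
    exact (mul_eq_zero.1 this).resolve_left hexp
  have hP : f (hat P) = 0 := by rw [hQ] at e1; linarith
  rw [hP, hQ, mul_zero, add_zero] at e3
  exact (mul_eq_zero.1 e3).resolve_left (by have := Real.exp_pos b; positivity)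

/-- Near `p` the map `τ` agrees with the projective map induced by `g`. -/
def LocallyProj {n : ℕ} (τ : Euc n → Euc n)
    (g : (Fin (n + 1) → ℝ) ≃ₗ[ℝ] (Fin (n + 1) → ℝ)) (p : Euc n) : Prop :=
  ∀ᶠ x in nhds p, ∃ c : ℝ, c ≠ 0 ∧ hat (τ x) = c • g (hat x)

/-- In the projective coordinates of a frame consisting of `p` and `n` points to which chords
are preserved, `τ` multiplies each coordinate by a constant. -/
lemma exists_locallyProj {n : ℕ} {Ω Ω' : Set (Euc n)}
    (hop : IsOpen Ω) (hbd : Bornology.IsBounded Ω) (hcv : Convex ℝ Ω)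
    (hop' : IsOpen Ω') (hbd' : Bornology.IsBounded Ω') (hcv' : Convex ℝ Ω')
    {τ : Euc n → Euc n} (hτ : IsHilbertIsometry Ω Ω' τ) {p : Euc n} (hp : p ∈ Ω)
    {w w' : Fin n → Euc n} (hmv : ∀ k, MovesTo Ω τ (w k) (w' k))
    (hlin : LinearIndependent ℝ (Fin.cons (hat p) (fun i : Fin n => hat (w i)) :
        Fin (n + 1) → Fin (n + 1) → ℝ)) :
    ∃ g, LocallyProj τ g p := by
  have hlin' := linearIndependent_image hop hbd hcv hop' hbd' hcv' hτ hp hmv hlin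
  obtain ⟨B, hB⟩ : ∃ B : Module.Basis (Fin (n + 1)) ℝ (Fin (n + 1) → ℝ),
      ⇑B = Fin.cons (hat p) (fun i : Fin n => hat (w i)) :=
    ⟨basisOfLinearIndependentOfCardEqFinrank hlin (by simp), by simp⟩
  obtain ⟨B', hB'⟩ : ∃ B : Module.Basis (Fin (n + 1)) ℝ (Fin (n + 1) → ℝ),
      ⇑B = Fin.cons (hat (τ p)) (fun i : Fin n => hat (w' i)) :=
    ⟨basisOfLinearIndependentOfCardEqFinrank hlin' (by simp), by simp⟩
  have hB0 : B 0 = hat p := by simp [hB]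
  have hBs : ∀ i : Fin n, B i.succ = hat (w i) := fun i => by simp [hB]
  have hB'0 : B' 0 = hat (τ p) := by simp [hB']
  have hB's : ∀ i : Fin n, B' i.succ = hat (w' i) := fun i => by simp [hB']
  choose a ha hmove using fun i => hmv i p hp
  let d : Fin (n + 1) → ℝ := Fin.cons 1 a
  have hd : ∀ k, IsUnit (d k) := fun k => by
    refine Fin.cases ?_ (fun i => ?_) k
    · simp [d]
    · simpa [d] using (ha i).ne'
  let g := B.equiv (B'.isUnitSMul hd) (Equiv.refl _)
  have hg0 : g (hat p) = hat (τ p) := by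
    rw [← hB0, Module.Basis.equiv_apply, Equiv.refl_apply, Module.Basis.isUnitSMul_apply]
    simp [d, hB'0]
  have hgs : ∀ i, g (hat (w i)) = a i • hat (w' i) := fun i => by
    rw [← hBs, Module.Basis.equiv_apply, Equiv.refl_apply, Module.Basis.isUnitSMul_apply]
    simp [d, hB's]
  obtain ⟨ε, hε, hbox⟩ := bary_box hop hp w
  refine ⟨g, ?_⟩
  filter_upwards [bary_surj p w hlin hε] with x ⟨y, hy, hxy⟩
  subst hxy
  -- the coordinates of the image of the point with coordinates `y`
  have hcoord : ∀ i, B'.coord 0 (hat (τ (bary p w y))) ≠ 0 ∧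
      B'.coord i.succ (hat (τ (bary p w y))) = a i * y i * B'.coord 0 (hat (τ (bary p w y))) := by
    intro i
    have hz0 : ∀ j : Fin n, |(0 : Fin n → ℝ) j| < ε := by simpa using fun _ => hε
    have hz1 := abs_update_lt hz0 i (hy i)
    refine box_induct (ε := ε) (fun z => B'.coord 0 (hat (τ (bary p w z))) ≠ 0 ∧
      B'.coord i.succ (hat (τ (bary p w z))) = a i * y i * B'.coord 0 (hat (τ (bary p w z))))
      (y₀ := Function.update 0 i (y i)) hz1 hy ?_ ?_
    · have h := bary_update p w (hbox _ hz0).1 (hbox _ hz1).1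
      rw [bary_zero] at h
      simp only [Pi.zero_apply, Finset.sum_const_zero, add_zero, sub_zero, div_one] at h
      obtain ⟨hm, h'⟩ := hmove i _ _ (hbox _ hz1).2 h
      have h'' := hat_smul_eq h'
      rw [← hB'0, ← hB's] at h''
      have c0 := congrArg (B'.coord 0) h''
      have ci := congrArg (B'.coord i.succ) h''
      simp at c0 ci
      simp only [Module.Basis.coord_apply]
      constructor
      · intro h0; rw [h0] at c0; simp at c0
      · have := hm.ne'
        apply mul_left_cancel₀ this
        rw [ci, mul_left_comm, c0]; ring
    · rintro z hz k hk ⟨hR0, hRi⟩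
      have hki : k ≠ i := by rintro rfl; simp at hk
      have hz' := abs_update_lt hz k (hy k)
      obtain ⟨m, hm, c, h⟩ := hat_move (hmv k) (hbox z hz).1 (hbox _ hz').1 (hbox z hz).2
        (hbox _ hz').2
      rw [← hB's] at h
      have c0 := congrArg (B'.coord 0) h
      have ci := congrArg (B'.coord i.succ) h
      simp [hki] at c0 ci
      simp only [Module.Basis.coord_apply] at hR0 hRi ⊢
      constructor
      · intro h0; rw [h0] at c0; simp at c0; exact hR0 c0.symm
      · apply mul_left_cancel₀ hm.ne'
        rw [ci, mul_left_comm, c0, hRi]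
  set μ := B'.coord 0 (hat (τ (bary p w y))) with hμ
  have hsig := (hbox y hy).1
  have hτx : hat (τ (bary p w y)) = μ • (hat (τ p) + ∑ i, (a i * y i) • hat (w' i)) := by
    conv_lhs => rw [← B'.sum_repr (hat (τ (bary p w y)))]
    rw [Fin.sum_univ_succ, hB'0, smul_add, Finset.smul_sum]
    congr 1
    refine Finset.sum_congr rfl fun i _ => ?_
    rw [hB's, smul_smul, ← Module.Basis.coord_apply, (hcoord i).2, mul_comm]
  have hμ0 : μ ≠ 0 := by
    intro h
    rw [h, zero_smul] at hτx
    exact hat_ne_zero _ hτx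
  have hgx : (1 + ∑ i, y i) • g (hat (bary p w y)) =
      hat (τ p) + ∑ i, (a i * y i) • hat (w' i) := by
    rw [← map_smul, hat_bary p w hsig.ne', map_add, map_sum, hg0]
    congr 1
    refine Finset.sum_congr rfl fun i _ => ?_
    rw [map_smul, hgs, smul_smul, mul_comm]
  exact ⟨μ * (1 + ∑ i, y i), mul_ne_zero hμ0 hsig.ne', by rw [hτx, ← hgx, smul_smul]⟩

/-- Two projective maps which agree on a nonempty open set are equal. -/
lemma proj_unique {n : ℕ} {U : Set (Euc n)} (hU : IsOpen U) (hne : U.Nonempty)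
    (hcv : Convex ℝ U) {g g' : (Fin (n + 1) → ℝ) ≃ₗ[ℝ] (Fin (n + 1) → ℝ)}
    (h : ∀ x ∈ U, ∃ c : ℝ, g (hat x) = c • g' (hat x)) :
    ∃ c : ℝ, c ≠ 0 ∧ ∀ z, g z = c • g' z := by
  obtain ⟨x₀, hx₀⟩ := hne
  obtain ⟨c, hc⟩ := h x₀ hx₀
  have hc0 : c ≠ 0 := by
    rintro rfl
    rw [zero_smul] at hc
    exact hat_ne_zero x₀ (g.map_eq_zero_iff.1 hc)
  have key : ∀ x ∈ U, g (hat x) = c • g' (hat x) := by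
    intro x hx
    rcases eq_or_ne x x₀ with rfl | hxne
    · exact hc
    obtain ⟨b, hb⟩ := h x hx
    obtain ⟨m, hm⟩ := h _ (hcv hx₀ hx (by norm_num : (0:ℝ) ≤ 1/2) (by norm_num : (0:ℝ) ≤ 1/2)
      (by norm_num))
    have hmid : hat ((1/2 : ℝ) • x₀ + (1/2 : ℝ) • x) = (1/2 : ℝ) • (hat x₀ + hat x) := by
      ext i
      refine Fin.lastCases ?_ (fun i => ?_) i
      · simp; norm_num
      · simp; ring
    rw [hmid, map_smul, map_smul, map_add, map_add, hc, hb] at hm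
    have h1 : g' ((c - m) • hat x₀ + (b - m) • hat x) = 0 := by
      rw [map_add, map_smul, map_smul]
      have h2 := congrArg (fun z => (2 : ℝ) • z) hm
      rw [← sub_eq_zero] at h2
      rw [← h2]
      module
    have h2 := g'.map_eq_zero_iff.1 h1
    have h3 : c - m + (b - m) = 0 := by simpa using congrFun h2 (Fin.last n)
    have h4 : (c - m) • (hat x₀ - hat x) = 0 := by
      rw [← h2, show b - m = -(c - m) by linarith]; module
    rcases smul_eq_zero.1 h4 with h5 | h5
    · rw [hb, show b = c by linarith]
    · exact absurd (hat_injective (sub_eq_zero.1 h5)).symm hxne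
  refine ⟨c, hc0, fun z => ?_⟩
  ext i
  have hf : (LinearMap.proj i : (Fin (n + 1) → ℝ) →ₗ[ℝ] ℝ) ∘ₗ
      ((g : (Fin (n + 1) → ℝ) →ₗ[ℝ] (Fin (n + 1) → ℝ)) - c • (g' : _ →ₗ[ℝ] _)) = 0 :=
    eq_zero_of_hat hU ⟨x₀, hx₀⟩ fun x hx => by simp [key x hx]
  have := LinearMap.congr_fun hf z
  simpa [sub_eq_zero] using this

/-- Locally projective maps of a convex set are projective. -/
lemma locallyProj_glue {n : ℕ} {Ω : Set (Euc n)} (hne : Ω.Nonempty) (hcv : Convex ℝ Ω)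
    {τ : Euc n → Euc n} (h : ∀ p ∈ Ω, ∃ g, LocallyProj τ g p) :
    ∃ g, ∀ p ∈ Ω, LocallyProj τ g p := by
  obtain ⟨p₀, hp₀⟩ := hne
  obtain ⟨g, hg⟩ := h p₀ hp₀
  refine ⟨g, fun p hp => ?_⟩
  have hop : IsOpen {p | LocallyProj τ g p} := isOpen_setOfPred_eventually_nhds
  refine hcv.isPreconnected.subset_of_closure_inter_subset hop ⟨p₀, hp₀, hg⟩ ?_ hp
  rintro q ⟨hq, hqΩ⟩
  obtain ⟨g', hg'⟩ := h q hqΩ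
  have hg'o : IsOpen {p | LocallyProj τ g' p} := isOpen_setOfPred_eventually_nhds
  obtain ⟨q', hq'1, hq'2⟩ := mem_closure_iff.1 hq _ hg'o hg'
  obtain ⟨r, hr, hball⟩ := Metric.eventually_nhds_iff_ball.1 (hq'1.and hq'2)
  obtain ⟨c, hc, hcg⟩ := proj_unique (g := g') (g' := g) Metric.isOpen_ball
    ⟨q', Metric.mem_ball_self hr⟩ (convex_ball q' r) (fun x hx => by
      obtain ⟨⟨c, hc, h1⟩, c', hc', h2⟩ := hball x hx
      refine ⟨c⁻¹ * c', ?_⟩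
      rw [mul_smul, ← h2, h1, smul_smul, inv_mul_cancel₀ hc, one_smul])
  filter_upwards [hg'] with x ⟨b, hb, hx⟩
  exact ⟨b * c, mul_ne_zero hb hc, by rw [hx, hcg, smul_smul]⟩

/-- In positive dimension the extreme points of the closure of an open set are boundary points. -/
lemma extremePoint_mem_frontier {n : ℕ} (hn : n ≠ 0) {Ω : Set (Euc n)} (hop : IsOpen Ω)
    {e : Euc n} (he : e ∈ extremePoints ℝ (closure Ω)) : e ∈ frontier Ω := by
  refine ⟨he.1, ?_⟩
  rw [hop.interior_eq]
  intro heΩ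
  have : Nonempty (Fin n) := ⟨⟨0, Nat.pos_of_ne_zero hn⟩⟩
  obtain ⟨d, hd⟩ := exists_ne (0 : Euc n)
  have hcont : Continuous fun t : ℝ => e + t • d := by fun_prop
  have : ∀ᶠ t in nhds (0 : ℝ), e + t • d ∈ Ω :=
    hcont.continuousAt.eventually_mem (hop.mem_nhds (by simpa using heΩ))
  obtain ⟨r, hr, hr'⟩ := Metric.eventually_nhds_iff.1 this
  have h1 := hr' (y := r / 2) (by
    rw [Real.dist_eq, sub_zero, abs_of_pos (by positivity)]; linarith)
  have h2 := hr' (y := -(r / 2)) (by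
    rw [Real.dist_eq, sub_zero, abs_neg, abs_of_pos (by positivity)]; linarith)
  have h3 := he.2 (subset_closure h1) (subset_closure h2)
    ⟨1/2, 1/2, by norm_num, by norm_num, by norm_num, by module⟩
  have h4 : (r / 2) • d = 0 := by simpa using h3
  rcases smul_eq_zero.1 h4 with h5 | h5
  · linarith
  · exact hd h5

/-- Let `τ : Ω → Ω'` be an isometry of Hilbert geometries in `ℝⁿ`. If
`τ` has a focusing `n`-simplex `Δ` — an `n`-simplex whose `n+1` vertices are (extreme
points of the closure of `Ω` which are) focusing points of `τ` and whose interior is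
contained in `Ω` — then `τ` is (the restriction of) a projective transformation. -/
theorem stmt_17 {n : ℕ} (Ω Ω' : Set (Euc n))
    (hne : Ω.Nonempty) (hop : IsOpen Ω) (hbd : Bornology.IsBounded Ω) (hcv : Convex ℝ Ω)
    (hne' : Ω'.Nonempty) (hop' : IsOpen Ω') (hbd' : Bornology.IsBounded Ω')
    (hcv' : Convex ℝ Ω') (τ : Euc n → Euc n) (hτ : IsHilbertIsometry Ω Ω' τ)
    (v : Fin (n + 1) → Euc n) (hvind : AffineIndependent ℝ v)
    (hvfoc : ∀ i, IsFocusingPoint Ω Ω' τ (v i))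
    (hvint : interior (convexHull ℝ (Set.range v)) ⊆ Ω) :
    IsProjectiveOn Ω τ := by
  suffices H : ∃ g, ∀ p ∈ Ω, LocallyProj τ g p by
    obtain ⟨g, hg⟩ := H
    refine ⟨g, fun x hx => ?_⟩
    obtain ⟨c, -, h⟩ := (hg x hx).self_of_nhds
    exact (Projectivization.mk_eq_mk_iff' ℝ _ _ _ _).2 ⟨c, h.symm⟩
  rcases eq_or_ne n 0 with rfl | hn
  · refine ⟨LinearEquiv.refl ℝ _, fun p _ => Filter.Eventually.of_forall fun x => ?_⟩
    exact ⟨1, one_ne_zero, by rw [one_smul, Subsingleton.elim (τ x) x]; rfl⟩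
  choose v' hv' using fun i => focusing_movesTo hne hop hbd hcv hop' hbd' hcv' hτ
    (extremePoint_mem_frontier hn hop (hvfoc i).1) (hvfoc i)
  refine locallyProj_glue hne hcv fun p hp => ?_
  obtain ⟨j, hj⟩ := exists_frame hvind p
  exact exists_locallyProj hop hbd hcv hop' hbd' hcv' hτ hp
    (w := fun i => v (j.succAbove i)) (w' := fun i => v' (j.succAbove i)) (fun k => hv' _) hj
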